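/- arXiv:1506.00143 — 2 statements merged into one kernel-verified Lean document; each statement's English description precedes it below -/
import Mathlib

section
/- Let d be a positive integer and let S = {S_k ≤ Sym({1,…,m_k})}_{k∈ℕ} be a sequence of finite transitive permutation groups such that each S_k is perfect and can be generated by at most d elements as an abstract group. Suppose that for every k ∈ ℕ there exist points i, j ∈ {1,…,m_k} whose stabilizers in S_k are distinct, i.e. St_{S_k}(i) ≠ St_{S_k}(j). Then the infinitely iterated exponentiation lim← S̃_k of the sequence is topologically finitely generated; more precisely, it is topologically generated by d + d(S_1) elements. -/
open Equiv

/-- The product-action permutation of `β → α` induced by `a : β → Perm α` and `b : Perm β`. -/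
def prodPerm {α β : Type} (a : β → Perm α) (b : Perm β) : Perm (β → α) where
  toFun x := fun i => a i (x (b⁻¹ i))
  invFun x := fun i => (a (b i))⁻¹ (x (b i))
  left_inv x := by funext i; simp
  right_inv x := by funext i; simp

@[simp] theorem prodPerm_apply {α β : Type} (a : β → Perm α) (b : Perm β) (x : β → α) (i : β) :
    prodPerm a b x i = a i (x (b⁻¹ i)) := rfl

theorem prodPerm_one {α β : Type} :
    prodPerm (fun _ : β => (1 : Perm α)) 1 = 1 := by
  apply Equiv.ext; intro x; funext i; simp

theorem prodPerm_mul {α β : Type} (a a' : β → Perm α) (b b' : Perm β) :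
    prodPerm a b * prodPerm a' b' = prodPerm (fun i => a i * a' (b⁻¹ i)) (b * b') := by
  apply Equiv.ext; intro x; funext i
  simp [Perm.mul_apply, mul_inv_rev]

theorem prodPerm_inv {α β : Type} (a : β → Perm α) (b : Perm β) :
    (prodPerm a b)⁻¹ = prodPerm (fun i => (a (b i))⁻¹) b⁻¹ := by
  apply Equiv.ext; intro x; funext i
  simp [prodPerm, Perm.inv_def]

/-- The exponentiation `A ⟨≀⟩ B` of permutation groups, as a subgroup of `Perm (β → α)`
acting by the product action. -/
def expWr {α β : Type} (A : Subgroup (Perm α)) (B : Subgroup (Perm β)) :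
    Subgroup (Perm (β → α)) where
  carrier := {π | ∃ (a : β → Perm α) (b : Perm β),
    (∀ i, a i ∈ A) ∧ b ∈ B ∧ π = prodPerm a b}
  one_mem' := ⟨fun _ => 1, 1, fun _ => A.one_mem, B.one_mem, prodPerm_one.symm⟩
  mul_mem' := by
    rintro π π' ⟨a, b, ha, hb, rfl⟩ ⟨a', b', ha', hb', rfl⟩
    exact ⟨fun i => a i * a' (b⁻¹ i), b * b',
      fun i => A.mul_mem (ha i) (ha' _), B.mul_mem hb hb', prodPerm_mul a a' b b'⟩
  inv_mem' := by
    rintro π ⟨a, b, ha, hb, rfl⟩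
    exact ⟨fun i => (a (b i))⁻¹, b⁻¹,
      fun i => A.inv_mem (ha _), B.inv_mem hb, prodPerm_inv a b⟩

/-- A bundled permutation group: a set together with a subgroup of its permutation group. -/
structure PermGroup where
  carrier : Type
  grp : Subgroup (Perm carrier)

/-- Exponentiation of bundled permutation groups. -/
def ExpP (A B : PermGroup) : PermGroup :=
  ⟨B.carrier → A.carrier, expWr A.grp B.grp⟩

/-- Iterated exponentiation of a sequence of permutation groups:
`S̃ 0 = S 0` and `S̃ (k+1) = S (k+1) ⟨≀⟩ S̃ k`. -/
def iterExpP (S : ℕ → PermGroup) : ℕ → PermGroup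
  | 0 => S 0
  | k + 1 => ExpP (S (k + 1)) (iterExpP S k)

/-- `π'` in `A ⟨≀⟩ P` projects to `π` in `P`. -/
def IsLift {A P : PermGroup} (π' : (ExpP A P).grp) (π : P.grp) : Prop :=
  ∃ a : P.carrier → Perm A.carrier, (∀ i, a i ∈ A.grp) ∧
    (π' : Perm (ExpP A P).carrier) = prodPerm a (π : Perm P.carrier)

theorem IsLift.one {A P : PermGroup} : IsLift (A := A) (P := P) 1 1 :=
  ⟨fun _ => 1, fun _ => A.grp.one_mem, by
    simp only [OneMemClass.coe_one]
    exact prodPerm_one.symm⟩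

theorem IsLift.mul {A P : PermGroup} {π₁ π₂ : (ExpP A P).grp} {ρ₁ ρ₂ : P.grp}
    (h₁ : IsLift π₁ ρ₁) (h₂ : IsLift π₂ ρ₂) : IsLift (π₁ * π₂) (ρ₁ * ρ₂) := by
  obtain ⟨a, ha, hEq⟩ := h₁
  obtain ⟨a', ha', hEq'⟩ := h₂
  exact ⟨fun i => a i * a' ((ρ₁ : Perm P.carrier)⁻¹ i),
    fun i => A.grp.mul_mem (ha i) (ha' _), by
      push_cast [hEq, hEq']
      exact prodPerm_mul a a' _ _⟩

theorem IsLift.inv {A P : PermGroup} {π₁ : (ExpP A P).grp} {ρ₁ : P.grp}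
    (h₁ : IsLift π₁ ρ₁) : IsLift π₁⁻¹ ρ₁⁻¹ := by
  obtain ⟨a, ha, hEq⟩ := h₁
  exact ⟨fun i => (a ((ρ₁ : Perm P.carrier) i))⁻¹,
    fun i => A.grp.inv_mem (ha _), by
      push_cast [hEq]
      exact prodPerm_inv a _⟩

/-- The inverse limit of the iterated exponentiations, realised as the subgroup of
compatible sequences in the product of all the finite levels. -/
def iterLimit (S : ℕ → PermGroup) : Subgroup (∀ k, (iterExpP S k).grp) where
  carrier := {f | ∀ k, IsLift (A := S (k + 1)) (P := iterExpP S k) (f (k + 1)) (f k)}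
  one_mem' := fun _ => IsLift.one
  mul_mem' := fun hf hg k => IsLift.mul (hf k) (hg k)
  inv_mem' := fun hf k => IsLift.inv (hf k)

/-- Each finite level carries the discrete topology; the limit then carries the subspace
topology of the product topology, i.e. the usual profinite topology. -/
instance (S : ℕ → PermGroup) (k : ℕ) : TopologicalSpace ((iterExpP S k).grp) := ⊥

/-- The minimal number of generators of a group. -/
noncomputable def minGens (G : Type*) [Group G] : ℕ :=
  sInf {r | ∃ T : Finset G, T.card = r ∧ Subgroup.closure (T : Set G) = ⊤}

/-!
An element of the limit is determined by its action on level `0` and by its labels, the components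
in the base groups of the successive exponentiations. A directed generator acts at level `j` as a
constant `X j ∈ S (j + 1)` on the coordinates in a set `activeSet j`. Some element `shift k`,
nontrivial only up to level `k`, preserves `activeSet k` but carries `activeSet j` off itself for
all `j > k`. Hence, for parameters trivial below `k`, the commutator of one directed generator with
the conjugate of another by `shift k` survives at level `k` only, where it is the commutator of the
constants.

Since `S (k + 1)` is perfect, this isolates all elements acting at level `k` alone, by a constant on
`activeSet k`. The translates of `activeSet k` separate the points of level `k`, and commutators
intersect supports, so perfectness yields the whole base group of level `k`. Removing level `k` from
the directed generators, one continues by induction.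
-/

section Groups

open scoped commutatorElement

variable {G ι : Type*} [Group G]

theorem commutator_le_of_closure_range_eq_top {X : ι → G}
    (hX : Subgroup.closure (Set.range X) = ⊤) {N : Subgroup G}
    (hcomm : ∀ i j, ⁅X i, X j⁆ ∈ N) (hnorm : ∀ i, X i ∈ Subgroup.normalizer (N : Set G)) :
    commutator G ≤ N := by
  have : N.Normal := Subgroup.normalizer_eq_top_iff.1 <| top_unique <|
    hX ▸ (Subgroup.closure_le _).2 (Set.range_subset_iff.2 hnorm)
  let π := QuotientGroup.mk' N
  have hclosure : Subgroup.closure (Set.range (π ∘ X)) = ⊤ := by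
    rw [Set.range_comp, ← MonoidHom.map_closure, hX, ← MonoidHom.range_eq_map,
      MonoidHom.range_eq_top.2 (QuotientGroup.mk'_surjective N)]
  have hcommute : ∀ x ∈ Set.range (π ∘ X), ∀ y ∈ Set.range (π ∘ X), x * y = y * x := by
    rintro _ ⟨i, rfl⟩ _ ⟨j, rfl⟩
    exact commutatorElement_eq_one_iff_mul_comm.1 ((QuotientGroup.eq_one_iff _).2 (hcomm i j))
  have : IsMulCommutative (⊤ : Subgroup (G ⧸ N)) :=
    hclosure ▸ Subgroup.isMulCommutative_closure hcommute
  exact Subgroup.Normal.quotient_commutative_iff_commutator_le.1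
    (.of_comm fun a b => setLike_mul_comm (Subgroup.mem_top a) (Subgroup.mem_top b))

theorem mulIndicator_inter_commutatorElement {Ω : Type*} (E F : Set Ω) (s t : G) :
    (E ∩ F).mulIndicator (Function.const Ω ⁅s, t⁆) =
      ⁅E.mulIndicator (Function.const Ω s), F.mulIndicator (Function.const Ω t)⁆ := by
  classical
  funext p
  by_cases hE : p ∈ E <;> by_cases hF : p ∈ F <;>
    simp [commutatorElement_def, hE, hF]

theorem pi_subgroup_eq_top_of_separating {Ω : Type*} [Finite Ω] [Nontrivial Ω]
    (hG : commutator G = ⊤) {N : Subgroup (Ω → G)}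
    (hsep : ∀ p q, q ≠ p → ∃ E : Set Ω, p ∈ E ∧ q ∉ E ∧
      ∀ s, E.mulIndicator (Function.const Ω s) ∈ N) : N = ⊤ := by
  classical
  have := Fintype.ofFinite Ω
  let 𝓔 : Set (Set Ω) := {E | ∀ s, E.mulIndicator (Function.const Ω s) ∈ N}
  have h_inf : InfClosed 𝓔 := by
    intro E hE F hF s
    let φ := (Set.mulIndicatorHom G (E ∩ F)).comp (Pi.constMonoidHom Ω G)
    have hφ : commutator G ≤ N.comap φ := by
      rw [commutator_def, Subgroup.commutator_le]
      intro s _ t _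
      change (E ∩ F).mulIndicator (Function.const Ω ⁅s, t⁆) ∈ N
      rw [mulIndicator_inter_commutatorElement]
      exact Subgroup.commutator_le_self N (Subgroup.commutator_mem_commutator (hE s) (hF t))
    exact hφ (hG ▸ Subgroup.mem_top s)
  have h_singleton (p : Ω) : {p} ∈ 𝓔 := by
    choose! E hpE hqE hE using hsep p
    have hne : (Finset.univ.erase p).Nonempty :=
      (exists_ne p).imp fun q hq => Finset.mem_erase.2 ⟨hq, Finset.mem_univ q⟩
    have h_inter : (Finset.univ.erase p).inf' hne E = {p} := by
      ext q
      simp only [Finset.inf'_eq_inf, Finset.inf_set_eq_iInter, Set.mem_iInter,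
        Finset.mem_erase, Finset.mem_univ, and_true, Set.mem_singleton_iff]
      refine ⟨fun h => by_contra fun hq => hqE q hq (h q hq), ?_⟩
      rintro rfl r hr
      exact hpE r hr
    exact h_inter ▸ h_inf.finsetInf'_mem hne fun q hq => hE q (Finset.ne_of_mem_erase hq)
  refine eq_top_iff.2 fun b _ => Subgroup.pi_mem_of_mulSingle_mem b fun p => ?_
  convert h_singleton p (b p) using 1
  funext q
  by_cases hq : q = p
  · subst hq; simp
  · simp [hq]

theorem exists_fin_closure_range_eq_top {d : ℕ} {T : Finset G} (hcard : T.card ≤ d)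
    (hT : Subgroup.closure (T : Set G) = ⊤) :
    ∃ x : Fin d → G, Subgroup.closure (Set.range x) = ⊤ := by
  obtain ⟨e⟩ : Nonempty (T ↪ Fin d) := Function.Embedding.nonempty_of_card_le (by simpa)
  refine ⟨Function.extend e Subtype.val 1, top_unique (hT ▸ Subgroup.closure_mono fun g hg => ?_)⟩
  exact ⟨e ⟨g, hg⟩, e.injective.extend_apply _ _ _⟩

theorem exists_fin_minGens_closure_range_eq_top (G : Type*) [Group G] [Group.FG G] :
    ∃ x : Fin (minGens G) → G, Subgroup.closure (Set.range x) = ⊤ := by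
  obtain ⟨T₀, hT₀⟩ := Group.FG.out (G := G)
  obtain ⟨T, hcard, hT⟩ : ∃ T : Finset G, T.card = minGens G ∧ Subgroup.closure (T : Set G) = ⊤ :=
    Nat.sInf_mem (s := {r | ∃ T : Finset G, T.card = r ∧ Subgroup.closure (T : Set G) = ⊤})
      ⟨T₀.card, T₀, rfl, hT₀⟩
  exact exists_fin_closure_range_eq_top hcard.le hT

end Groups

/-- The points permuted by the `k`-th iterated exponentiation; a point of level `k + 1` is a
function on the points of level `k`. -/
abbrev Point (S : ℕ → PermGroup) (k : ℕ) : Type := (iterExpP S k).carrier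

/-- A choice, at every level `k`, of an element of the base group of
`S (k + 1) ⟨≀⟩ (iterExpP S k)`. -/
abbrev Labels (S : ℕ → PermGroup) : Type := ∀ k, Point S k → (S (k + 1)).grp

instance instFinitePoint (S : ℕ → PermGroup) [∀ k, Finite (S k).carrier] :
    ∀ k, Finite (Point S k)
  | 0 => inferInstanceAs (Finite (S 0).carrier)
  | k + 1 =>
    have := instFinitePoint S k
    inferInstanceAs (Finite (Point S k → (S (k + 1)).carrier))

namespace iterLimit

variable {S : ℕ → PermGroup} {k : ℕ}

instance (k : ℕ) : MulAction (iterLimit S) (Point S k) where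
  smul γ p := (γ.1 k).1 p
  one_smul _ := rfl
  mul_smul _ _ _ := rfl

/-- The base-group components of an element of the limit. -/
noncomputable def label (γ : iterLimit S) : Labels S := fun k p =>
  ⟨(γ.2 k).choose p, (γ.2 k).choose_spec.1 p⟩

theorem smul_apply (γ : iterLimit S) (f : Point S (k + 1)) (p : Point S k) :
    (γ • f) p = label γ k p • f (γ⁻¹ • p) :=
  congrFun (congrArg (fun π : Perm (Point S (k + 1)) => π f) (γ.2 k).choose_spec.2) p

theorem smul_apply_smul (γ : iterLimit S) (f : Point S (k + 1)) (p : Point S k) :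
    (γ • f) (γ • p) = label γ k (γ • p) • f p := by
  rw [smul_apply, inv_smul_smul]

theorem label_eq_of_smul_apply {γ : iterLimit S} {a : Point S k → (S (k + 1)).grp}
    (h : ∀ (f : Point S (k + 1)) (p : Point S k), (γ • f) p = a p • f (γ⁻¹ • p)) :
    label γ k = a :=
  funext fun p => Subtype.ext <| Equiv.ext fun t =>
    (smul_apply γ (fun _ : Point S k => t) p).symm.trans (h (fun _ : Point S k => t) p)

theorem label_mul (γ δ : iterLimit S) (k : ℕ) (p : Point S k) :
    label (γ * δ) k p = label γ k p * label δ k (γ⁻¹ • p) := by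
  refine congrFun (label_eq_of_smul_apply
    (a := fun p => label γ k p * label δ k (γ⁻¹ • p)) fun f p => ?_) p
  rw [mul_smul γ δ f, smul_apply, smul_apply, mul_inv_rev, mul_smul (label γ k p), mul_smul δ⁻¹]

theorem label_one (k : ℕ) (p : Point S k) : label (1 : iterLimit S) k p = 1 :=
  congrFun (label_eq_of_smul_apply (a := 1) fun f p => by simp) p

theorem label_inv (γ : iterLimit S) (k : ℕ) (p : Point S k) :
    label γ⁻¹ k p = (label γ k (γ • p))⁻¹ := by
  have h := label_mul γ⁻¹ γ k p
  rw [inv_mul_cancel, label_one, inv_inv] at h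
  exact eq_inv_of_mul_eq_one_left h.symm

theorem smul_eq_smul_of_label_eq {γ δ : iterLimit S} {n : ℕ}
    (hroot : ∀ p : Point S 0, γ • p = δ • p) (hlabel : ∀ j < n, label γ j = label δ j) :
    ∀ j ≤ n, ∀ p : Point S j, γ • p = δ • p := by
  intro j
  induction j with
  | zero => exact fun _ => hroot
  | succ j ih =>
    intro hj f
    funext q
    obtain ⟨p, hp⟩ := MulAction.surjective γ q
    subst hp
    have hp : γ • p = δ • p := ih (by omega) p
    calc (γ • f) (γ • p) = label γ j (γ • p) • f p := smul_apply_smul γ f p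
      _ = label δ j (δ • p) • f p := by rw [hp, hlabel j hj]
      _ = (δ • f) (δ • p) := (smul_apply_smul δ f p).symm
      _ = (δ • f) (γ • p) := by rw [hp]

theorem val_eq_of_smul_eq {γ δ : iterLimit S} (h : ∀ p : Point S k, γ • p = δ • p) :
    γ.1 k = δ.1 k :=
  Subtype.ext (Equiv.ext h)

theorem ext_label {γ δ : iterLimit S} (hroot : ∀ p : Point S 0, γ • p = δ • p)
    (hlabel : label γ = label δ) : γ = δ :=
  Subtype.ext <| funext fun k => val_eq_of_smul_eq <|
    smul_eq_smul_of_label_eq hroot (fun j _ => congrFun hlabel j) k le_rfl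

section ofPortrait

/-- The element acting as `s` on the points of level `0` and with labels `a`, at level `k`. -/
def portraitLevel (s : (iterExpP S 0).grp) (a : Labels S) : ∀ k, (iterExpP S k).grp
  | 0 => s
  | k + 1 => ⟨prodPerm (fun p => (a k p).1) (portraitLevel s a k).1,
      ⟨_, _, fun p => (a k p).2, (portraitLevel s a k).2, rfl⟩⟩

/-- The element of the limit acting as `s` on the points of level `0` and with labels `a`. -/
def ofPortrait (s : (iterExpP S 0).grp) (a : Labels S) : iterLimit S :=
  ⟨portraitLevel s a, fun k => ⟨fun p => (a k p).1, fun p => (a k p).2, rfl⟩⟩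

@[simp] theorem label_ofPortrait (s : (iterExpP S 0).grp) (a : Labels S) :
    label (ofPortrait s a) = a :=
  funext fun _ => label_eq_of_smul_apply fun _ _ => rfl

theorem ofPortrait_one_smul {a : Labels S} (ha : ∀ j < k, a j = 1) {j : ℕ} (hj : j ≤ k)
    (p : Point S j) : ofPortrait 1 a • p = p := by
  have h := smul_eq_smul_of_label_eq (γ := ofPortrait 1 a) (δ := 1) (n := k) (fun p => rfl)
    (fun j hj => by rw [label_ofPortrait, ha j hj]; exact (funext (label_one j)).symm) j hj p
  rwa [one_smul] at h

theorem ofPortrait_one_mul {a b : Labels S}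
    (h : ∀ j p, b j ((ofPortrait 1 a)⁻¹ • p) = b j p) :
    ofPortrait 1 a * ofPortrait 1 b = ofPortrait 1 (a * b) := by
  refine ext_label (fun p => rfl) (funext fun j => funext fun p => ?_)
  simp only [label_mul, label_ofPortrait, h, Pi.mul_apply]

/-- The embedding of `S 0` in the limit as the elements without nontrivial labels. -/
def rootHom : (iterExpP S 0).grp →* iterLimit S :=
  MonoidHom.mk' (fun s => ofPortrait s 1) fun s t =>
    ext_label (fun _ => rfl) <| funext fun j => funext fun p => by simp [label_mul]

theorem label_rootHom (s : (iterExpP S 0).grp) : label (rootHom s) = 1 := label_ofPortrait s 1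

open Classical in
/-- The embedding in the limit of the base group of `S (k + 1) ⟨≀⟩ (iterExpP S k)`. -/
noncomputable def levelHom (k : ℕ) : (Point S k → (S (k + 1)).grp) →* iterLimit S :=
  MonoidHom.mk' (fun b => ofPortrait 1 (Pi.mulSingle k b)) fun b b' => by
    rw [Pi.mulSingle_mul, ofPortrait_one_mul]
    intro j p
    rcases eq_or_ne j k with rfl | hj
    · rw [inv_smul_eq_iff.2 (ofPortrait_one_smul (fun i hi => ?_) le_rfl p).symm]
      simp [hi.ne]
    · simp [hj]

theorem label_levelHom_self (b : Point S k → (S (k + 1)).grp) : label (levelHom k b) k = b := by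
  simp [levelHom]

theorem label_levelHom_of_ne (b : Point S k → (S (k + 1)).grp) {j : ℕ} (hj : j ≠ k) :
    label (levelHom k b) j = 1 := by
  simp [levelHom, hj]

theorem levelHom_smul (b : Point S k → (S (k + 1)).grp) {j : ℕ} (hj : j ≤ k) (p : Point S j) :
    levelHom k b • p = p :=
  ofPortrait_one_smul (fun _ hi => by simp [hi.ne]) hj p

theorem levelHom_smul_apply (b : Point S k → (S (k + 1)).grp) (f : Point S (k + 1))
    (p : Point S k) : (levelHom k b • f) p = b p • f p := by
  rw [smul_apply, label_levelHom_self, ← map_inv, levelHom_smul _ le_rfl]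

end ofPortrait

section finitary

/-- The copy of `iterExpP S k` in the limit: the elements whose labels of level `≥ k` are
trivial. -/
def finitary (S : ℕ → PermGroup) (k : ℕ) : Subgroup (iterLimit S) where
  carrier := {γ | ∀ j, k ≤ j → ∀ p, label γ j p = 1}
  one_mem' j _ p := label_one j p
  mul_mem' {γ δ} hγ hδ j hj p := by rw [label_mul, hγ j hj, hδ j hj, mul_one]
  inv_mem' {γ} hγ j hj p := by rw [label_inv, hγ j hj, inv_one]

theorem finitary_mono {l : ℕ} (h : k ≤ l) : finitary S k ≤ finitary S l :=
  fun _ hγ j hj => hγ j (h.trans hj)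

theorem smul_apply_of_mem_finitary {g : iterLimit S} (hg : g ∈ finitary S k)
    (f : Point S (k + 1)) (p : Point S k) : (g • f) p = f (g⁻¹ • p) := by
  rw [smul_apply, hg k le_rfl, one_smul]

theorem rootHom_mem_finitary (s : (iterExpP S 0).grp) : rootHom s ∈ finitary S 0 :=
  fun j _ p => congrFun (congrFun (label_rootHom s) j) p

theorem levelHom_mem_finitary (b : Point S k → (S (k + 1)).grp) :
    levelHom k b ∈ finitary S (k + 1) :=
  fun _ hj p => congrFun (label_levelHom_of_ne b (Nat.ne_of_gt hj)) p

theorem finitary_zero : finitary S 0 = (rootHom (S := S)).range := by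
  refine le_antisymm (fun γ hγ => ?_) ?_
  · refine ⟨γ.1 0, ext_label (fun _ => rfl) ?_⟩
    funext j p
    rw [label_rootHom]
    exact (hγ j j.zero_le p).symm
  · rintro _ ⟨s, rfl⟩
    exact rootHom_mem_finitary s

theorem finitary_succ_le {H : Subgroup (iterLimit S)} (hfin : finitary S k ≤ H)
    (hlevel : ∀ b, levelHom k b ∈ H) : finitary S (k + 1) ≤ H := by
  intro γ hγ
  refine (H.mul_mem_cancel_left (H.inv_mem (hlevel (label γ k)))).1 (hfin fun j hj p => ?_)
  rw [← map_inv, label_mul]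
  rcases hj.eq_or_lt with rfl | hj
  · rw [← map_inv, inv_inv, levelHom_smul _ le_rfl, label_levelHom_self, Pi.inv_apply,
      inv_mul_cancel]
  · rw [hγ j hj, label_levelHom_of_ne _ hj.ne', Pi.one_apply, mul_one]

theorem conj_ofPortrait {g : iterLimit S} (hg : g ∈ finitary S k) {a : Labels S}
    (ha : ∀ j < k, a j = 1) :
    g * ofPortrait 1 a * g⁻¹ = ofPortrait 1 fun j p => a j (g⁻¹ • p) := by
  refine ext_label (fun p => ?_) (funext fun j => funext fun p => ?_)
  · rw [mul_smul, mul_smul, ofPortrait_one_smul ha k.zero_le, smul_inv_smul]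
    rfl
  rw [label_mul, label_mul, label_ofPortrait, label_ofPortrait]
  rcases lt_or_ge j k with hj | hj
  · have h_inv : (g * ofPortrait 1 a)⁻¹ • p = g⁻¹ • p := by
      rw [mul_inv_rev, mul_smul, inv_smul_eq_iff, ofPortrait_one_smul ha hj.le]
    simp only [h_inv, ha j hj, Pi.one_apply, mul_one, ← label_mul, mul_inv_cancel, label_one]
  · rw [hg j hj, inv_mem hg j hj, one_mul, mul_one]

theorem conj_levelHom {g : iterLimit S} (hg : g ∈ finitary S k)
    (b : Point S k → (S (k + 1)).grp) :
    g * levelHom k b * g⁻¹ = levelHom k fun p => b (g⁻¹ • p) := by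
  refine (conj_ofPortrait hg fun j hj => by simp [hj.ne]).trans ?_
  refine congrArg (ofPortrait 1) (funext fun j => funext fun p => ?_)
  rcases eq_or_ne j k with rfl | hj
  · simp
  · simp [hj]

theorem exists_mem_finitary_smul_eq [∀ k, MulAction.IsPretransitive (S k).grp (S k).carrier] :
    ∀ (k : ℕ) (p q : Point S k), ∃ γ ∈ finitary S k, γ • p = q
  | 0, p, q => by
    obtain ⟨s, hs⟩ :=
      MulAction.exists_smul_eq (S 0).grp (show (S 0).carrier from p) (show (S 0).carrier from q)
    exact ⟨rootHom s, rootHom_mem_finitary s, hs⟩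
  | k + 1, f, g => by
    choose b hb using fun z => MulAction.exists_smul_eq (S (k + 1)).grp (f z) (g z)
    exact ⟨levelHom k b, levelHom_mem_finitary b,
      funext fun z => (levelHom_smul_apply b f z).trans (hb z)⟩

theorem exists_mem_finitary_val_eq (γ : iterLimit S) (n : ℕ) :
    ∃ δ ∈ finitary S n, ∀ j ≤ n, δ.1 j = γ.1 j := by
  let a : Labels S := fun j p => if j < n then label γ j p else 1
  refine ⟨ofPortrait (γ.1 0) a, fun j hj p => ?_, fun j hj => val_eq_of_smul_eq ?_⟩
  · rw [label_ofPortrait]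
    exact if_neg hj.not_gt
  · refine smul_eq_smul_of_label_eq (γ := ofPortrait (γ.1 0) a) (δ := γ) (fun _ => rfl)
      (fun i hi => ?_) j hj
    funext p
    rw [label_ofPortrait]
    exact if_pos hi

theorem dense_of_finitary_le {H : Subgroup (iterLimit S)} (h : ∀ k, finitary S k ≤ H) :
    Dense (H : Set (iterLimit S)) := by
  refine dense_iff_inter_open.2 fun U hU ⟨γ, hγ⟩ => ?_
  obtain ⟨V, hV, rfl⟩ := isOpen_induced_iff.1 hU
  obtain ⟨I, u, hu, huV⟩ := isOpen_pi_iff.1 hV γ.1 hγ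
  obtain ⟨δ, hδ, hδγ⟩ := exists_mem_finitary_val_eq γ (I.sup id)
  refine ⟨δ, huV fun i hi => ?_, h _ hδ⟩
  rw [hδγ i (Finset.le_sup (f := id) hi)]
  exact (hu i hi).2

end finitary

end iterLimit

/-- In every `S k`, points `c k`, `x k` and an element `σ k` fixing the former and moving the
latter; they witness that two point stabilizers of `S k` differ. -/
structure BasePoints (S : ℕ → PermGroup) where
  c : ∀ k, (S k).carrier
  x : ∀ k, (S k).carrier
  σ : ∀ k, (S k).grp
  σ_smul_c : ∀ k, σ k • c k = c k
  σ_smul_x_ne : ∀ k, σ k • x k ≠ x k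

namespace BasePoints

open iterLimit

variable {S : ℕ → PermGroup} {k : ℕ}

theorem nonempty_of_setOf_fixing_ne (hstab : ∀ k, ∃ i j : (S k).carrier,
    {σ : Perm (S k).carrier | σ ∈ (S k).grp ∧ σ i = i} ≠
      {σ : Perm (S k).carrier | σ ∈ (S k).grp ∧ σ j = j}) :
    Nonempty (BasePoints S) := by
  have h (k : ℕ) : ∃ (c x : (S k).carrier) (σ : (S k).grp), σ • c = c ∧ σ • x ≠ x := by
    obtain ⟨i, j, hij⟩ := hstab k
    rcases not_and_or.1 fun h => hij (Set.Subset.antisymm_iff.2 h) with h | h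
    · obtain ⟨σ, ⟨hσ, hi⟩, hj⟩ := Set.not_subset.1 h
      exact ⟨i, j, ⟨σ, hσ⟩, hi, fun h => hj ⟨hσ, h⟩⟩
    · obtain ⟨σ, ⟨hσ, hj⟩, hi⟩ := Set.not_subset.1 h
      exact ⟨j, i, ⟨σ, hσ⟩, hj, fun h => hi ⟨hσ, h⟩⟩
  choose c x σ hc hx using h
  exact ⟨⟨c, x, σ, hc, hx⟩⟩

variable (D : BasePoints S)

theorem x_ne_c (k : ℕ) : D.x k ≠ D.c k := fun h =>
  D.σ_smul_x_ne k (by rw [h, D.σ_smul_c])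

theorem σ_smul_x_ne_c (k : ℕ) : D.σ k • D.x k ≠ D.c k := fun h =>
  D.x_ne_c k (smul_left_cancel (D.σ k) (h.trans (D.σ_smul_c k).symm))

section Relations

/-- The logical relation on points generated by equality of entries different from the base
points `c k`: functions are related when they send related arguments to equal values other than
`c (k + 1)`. It is a partial equivalence relation; its reflexive points are called quiet. -/
def QuietSim : ∀ k, Point S k → Point S k → Prop
  | 0, p, q => p = q ∧ p ≠ D.c 0
  | k + 1, f, g => ∀ p q, QuietSim k p q → f p = g q ∧ f p ≠ D.c (k + 1)

/-- The variant of `BasePoints.QuietSim` in which the values may be base points. -/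
def Sim : ∀ k, Point S k → Point S k → Prop
  | 0, p, q => p = q
  | k + 1, f, g => ∀ p q, D.QuietSim k p q → f p = g q

open Classical in
/-- A quiet point of each level, recognising by the value `x (k + 1)` the points related to its
predecessor. -/
noncomputable def quietPt : ∀ k, Point S k
  | 0 => D.x 0
  | k + 1 => fun p =>
    if D.QuietSim k p (quietPt k) then D.x (k + 1) else D.σ (k + 1) • D.x (k + 1)

open Classical in
/-- A point of each level which is not quiet, as it takes the value `c (k + 1)` at the points
related to `quietPt k`. -/
noncomputable def activePt : ∀ k, Point S k
  | 0 => D.c 0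
  | k + 1 => fun p =>
    if D.QuietSim k p (D.quietPt k) then D.c (k + 1) else D.σ (k + 1) • D.x (k + 1)

/-- The points on which the directed generators act at level `k`. -/
def activeSet (k : ℕ) : Set (Point S k) := {p | D.Sim k p (D.activePt k)}

variable {D}

theorem QuietSim.symm : ∀ {k : ℕ} {p q : Point S k}, D.QuietSim k p q → D.QuietSim k q p
  | 0, _, _, h => ⟨h.1.symm, fun hq => h.2 (h.1.trans hq)⟩
  | _ + 1, _, _, h => fun p q hpq =>
    have hqp := h q p hpq.symm
    ⟨hqp.1.symm, fun hc => hqp.2 (hqp.1.trans hc)⟩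

theorem QuietSim.trans : ∀ {k : ℕ} {p q r : Point S k},
    D.QuietSim k p q → D.QuietSim k q r → D.QuietSim k p r
  | 0, _, _, _, hpq, hqr => ⟨hpq.1.trans hqr.1, hpq.2⟩
  | _ + 1, _, _, _, hfg, hgh => fun p q hpq =>
    ⟨(hfg p q hpq).1.trans (hgh q q (hpq.symm.trans hpq)).1, (hfg p q hpq).2⟩

theorem QuietSim.left {p q : Point S k} (h : D.QuietSim k p q) : D.QuietSim k p p :=
  h.trans h.symm

theorem QuietSim.congr_left {p q r : Point S k} (h : D.QuietSim k p q) :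
    D.QuietSim k p r ↔ D.QuietSim k q r :=
  ⟨h.symm.trans, h.trans⟩

theorem QuietSim.of_sim : ∀ {k : ℕ} {p q : Point S k},
    D.QuietSim k p p → D.Sim k p q → D.QuietSim k q q
  | 0, _, _, hp, h => ⟨rfl, fun hq => hp.2 (Eq.trans h hq)⟩
  | _ + 1, _, _, hf, hfg => fun p q hpq =>
    have hgp := hfg q p hpq.symm
    have hff := hf q q hpq.symm.left
    ⟨hgp.symm.trans ((hf p q hpq).1.symm.trans (hfg p q hpq)), fun hc => hff.2 (hgp.trans hc)⟩

variable (D)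

theorem quietPt_succ_apply {p : Point S k} (hp : D.QuietSim k p (D.quietPt k)) :
    D.quietPt (k + 1) p = D.x (k + 1) := if_pos hp

theorem quietPt_succ_apply_of_not {p : Point S k} (hp : ¬D.QuietSim k p (D.quietPt k)) :
    D.quietPt (k + 1) p = D.σ (k + 1) • D.x (k + 1) := if_neg hp

theorem activePt_succ_apply {p : Point S k} (hp : D.QuietSim k p (D.quietPt k)) :
    D.activePt (k + 1) p = D.c (k + 1) := if_pos hp

theorem activePt_succ_apply_of_not {p : Point S k} (hp : ¬D.QuietSim k p (D.quietPt k)) :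
    D.activePt (k + 1) p = D.σ (k + 1) • D.x (k + 1) := if_neg hp

theorem quietSim_quietPt : ∀ k, D.QuietSim k (D.quietPt k) (D.quietPt k)
  | 0 => ⟨rfl, D.x_ne_c 0⟩
  | k + 1 => fun p q hpq => by
    by_cases hp : D.QuietSim k p (D.quietPt k)
    · rw [D.quietPt_succ_apply hp, D.quietPt_succ_apply (hpq.congr_left.1 hp)]
      exact ⟨rfl, D.x_ne_c _⟩
    · rw [D.quietPt_succ_apply_of_not hp,
        D.quietPt_succ_apply_of_not (mt hpq.congr_left.2 hp)]
      exact ⟨rfl, D.σ_smul_x_ne_c _⟩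

theorem activePt_mem_activeSet : ∀ k, D.activePt k ∈ D.activeSet k
  | 0 => rfl
  | k + 1 => fun p q hpq => by
    by_cases hp : D.QuietSim k p (D.quietPt k)
    · rw [D.activePt_succ_apply hp, D.activePt_succ_apply (hpq.congr_left.1 hp)]
    · rw [D.activePt_succ_apply_of_not hp,
        D.activePt_succ_apply_of_not (mt hpq.congr_left.2 hp)]

theorem not_quietSim_activePt : ∀ k, ¬D.QuietSim k (D.activePt k) (D.activePt k)
  | 0 => fun h => h.2 rfl
  | k + 1 => fun h =>
    (h _ _ (D.quietSim_quietPt k)).2 (D.activePt_succ_apply (D.quietSim_quietPt k))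

theorem nontrivial_point (D : BasePoints S) (k : ℕ) : Nontrivial (Point S k) :=
  ⟨D.quietPt k, D.activePt k, fun h => D.not_quietSim_activePt k (h ▸ D.quietSim_quietPt k)⟩

end Relations

section Compat

/-- Acting by `γ` on the left argument and by `δ` on the right one preserves both relations. -/
structure Compat (k : ℕ) (γ δ : iterLimit S) : Prop where
  quietSim_iff : ∀ p q : Point S k, D.QuietSim k (γ • p) (δ • q) ↔ D.QuietSim k p q
  sim_iff : ∀ p q : Point S k, D.Sim k (γ • p) (δ • q) ↔ D.Sim k p q

variable {D}

theorem Compat.succ {γ δ : iterLimit S} (h : D.Compat k γ δ)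
    (hlabel : ∀ p q, D.QuietSim k p q →
      label γ k p = label δ k q ∧ label γ k p • D.c (k + 1) = D.c (k + 1)) :
    D.Compat (k + 1) γ δ := by
  have forall_iff {R R' : Point S k → Point S k → Prop}
      (hR : ∀ p q, D.QuietSim k p q → (R (γ • p) (δ • q) ↔ R' p q)) :
      (∀ p q, D.QuietSim k p q → R p q) ↔ ∀ p q, D.QuietSim k p q → R' p q := by
    rw [(MulAction.surjective γ).forall]
    refine forall_congr' fun p => ?_
    rw [(MulAction.surjective δ).forall]
    refine forall_congr' fun q => ?_
    rw [h.quietSim_iff]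
    exact forall_congr' (hR p q)
  have eq_iff (f g : Point S (k + 1)) (p q : Point S k) (hpq : D.QuietSim k p q) :
      (γ • f) (γ • p) = (δ • g) (δ • q) ↔ f p = g q := by
    rw [smul_apply_smul, smul_apply_smul,
      (hlabel _ _ ((h.quietSim_iff p q).2 hpq)).1, smul_left_cancel_iff]
  have eq_c_iff (f : Point S (k + 1)) (p q : Point S k) (hpq : D.QuietSim k p q) :
      (γ • f) (γ • p) = D.c (k + 1) ↔ f p = D.c (k + 1) := by
    rw [smul_apply_smul, smul_eq_iff_eq_inv_smul,
      inv_smul_eq_iff.2 (hlabel _ _ ((h.quietSim_iff p q).2 hpq)).2.symm]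
  exact ⟨fun f g => forall_iff fun p q hpq =>
      and_congr (eq_iff f g p q hpq) (not_congr (eq_c_iff f p q hpq)),
    fun f g => forall_iff (eq_iff f g)⟩

end Compat

section DirectedGenerators

/-- The labels which are trivial at quiet points and depend only on the `BasePoints.Sim`-class. -/
def quietLabels : Subgroup (Labels S) where
  carrier := {a | (∀ j p q, D.Sim j p = D.Sim j q → a j p = a j q) ∧
    ∀ j p, D.QuietSim j p p → a j p = 1}
  one_mem' := ⟨fun _ _ _ _ => rfl, fun _ _ _ => rfl⟩
  mul_mem' ha hb := ⟨fun j p q h => congrArg₂ (· * ·) (ha.1 j p q h) (hb.1 j p q h),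
    fun j p h => by simp only [Pi.mul_apply, ha.2 j p h, hb.2 j p h, mul_one]⟩
  inv_mem' ha := ⟨fun j p q h => congrArg (·⁻¹) (ha.1 j p q h),
    fun j p h => inv_eq_one.2 (ha.2 j p h)⟩

theorem compat_ofPortrait_one {a : Labels S} (ha : ∀ j p, D.QuietSim j p p → a j p = 1) :
    ∀ k, D.Compat k (ofPortrait 1 a) 1
  | 0 => ⟨fun _ _ => Iff.rfl, fun _ _ => Iff.rfl⟩
  | k + 1 => (compat_ofPortrait_one ha k).succ fun p q hpq => by
    rw [label_ofPortrait, ha k p hpq.left, label_one]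
    exact ⟨rfl, one_smul _ _⟩

/-- The limit elements with given quiet labels: on these, `ofPortrait` is multiplicative. -/
def quietHom : D.quietLabels →* iterLimit S :=
  MonoidHom.mk' (fun a => ofPortrait 1 a.1) fun a b => by
    refine (ofPortrait_one_mul fun j p => b.2.1 j _ _ (funext fun q => propext ?_)).symm
    have h := (D.compat_ofPortrait_one a.2.2 j).sim_iff ((ofPortrait 1 a.1)⁻¹ • p) q
    rw [smul_inv_smul, one_smul] at h
    exact h.symm

open Classical in
/-- The quiet labels constant on the `BasePoints.Sim`-class of `q j`, for each level `j`. -/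
noncomputable def simHom (q : ∀ j, Point S j) (hq : ∀ j, ¬D.QuietSim j (q j) (q j)) :
    (∀ j, (S (j + 1)).grp) →* D.quietLabels :=
  MonoidHom.mk' (fun X => ⟨fun j p => if D.Sim j p (q j) then X j else 1,
      fun j p p' h => by simp only [h],
      fun j p hp => if_neg fun h => hq j (hp.of_sim h)⟩) fun X Y => by
    ext j p
    by_cases h : D.Sim j p (q j) <;> simp [h]

/-- The directed generator with parameters `X`: it acts as `X j` on the coordinates in
`activeSet j`. -/
noncomputable def gen : (∀ j, (S (j + 1)).grp) →* iterLimit S :=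
  D.quietHom.comp (D.simHom D.activePt D.not_quietSim_activePt)

theorem gen_mulSingle (s : (S (k + 1)).grp) :
    D.gen (Pi.mulSingle k s) =
      levelHom k ((D.activeSet k).mulIndicator (Function.const _ s)) := by
  refine ext_label (fun p => rfl) (funext fun j => ?_)
  change label (ofPortrait 1 _) j = _
  rw [label_ofPortrait]
  rcases eq_or_ne j k with rfl | hj
  · rw [label_levelHom_self]
    funext p
    by_cases hp : D.Sim j p (D.activePt j) <;> simp [simHom, activeSet, hp]
  · rw [label_levelHom_of_ne _ hj]
    funext p
    simp [simHom, hj]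

end DirectedGenerators

section Shift

open Classical in
/-- An element of `finitary S k` which fixes `activePt k` and, for every `j > k`, carries
`activeSet j` off itself. -/
noncomputable def shift : ℕ → iterLimit S
  | 0 => rootHom (D.σ 0)
  | k + 1 => levelHom k fun p => if D.QuietSim k p (D.quietPt k) then D.σ (k + 1) else 1

theorem shift_mem_finitary : ∀ k, D.shift k ∈ finitary S k
  | 0 => rootHom_mem_finitary _
  | _ + 1 => levelHom_mem_finitary _

theorem label_shift_smul_c {j : ℕ} {p q : Point S j} (hpq : D.QuietSim j p q) :
    ∀ k, label (D.shift k) j p = label (D.shift k) j q ∧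
      label (D.shift k) j p • D.c (j + 1) = D.c (j + 1)
  | 0 => by
    have h : label (D.shift 0) = 1 := label_rootHom (D.σ 0)
    rw [h]
    exact ⟨rfl, one_smul _ _⟩
  | k + 1 => by
    rw [shift]
    rcases eq_or_ne j k with rfl | hj
    · rw [label_levelHom_self]
      by_cases hp : D.QuietSim j p (D.quietPt j)
      · rw [if_pos hp, if_pos (hpq.congr_left.1 hp)]
        exact ⟨rfl, D.σ_smul_c _⟩
      · rw [if_neg hp, if_neg (mt hpq.congr_left.2 hp)]
        exact ⟨rfl, one_smul _ _⟩
    · rw [label_levelHom_of_ne _ hj]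
      exact ⟨rfl, one_smul _ _⟩

theorem shift_smul_activePt_zero : ∀ k, D.shift k • (D.activePt 0 : Point S 0) = D.activePt 0
  | 0 => D.σ_smul_c 0
  | _ + 1 => levelHom_smul _ (Nat.zero_le _) _

theorem compat_shift (k : ℕ) : ∀ j, D.Compat j (D.shift k) (D.shift k)
  | 0 =>
    have eq_c_iff (p : Point S 0) : D.shift k • p = D.c 0 ↔ p = D.c 0 :=
      (Eq.congr_right (D.shift_smul_activePt_zero k)).symm.trans (smul_left_cancel_iff _)
    ⟨fun p _ => and_congr (smul_left_cancel_iff _) (not_congr (eq_c_iff p)),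
      fun _ _ => smul_left_cancel_iff _⟩
  | j + 1 => (compat_shift k j).succ fun _ _ hpq => D.label_shift_smul_c hpq k

theorem shift_smul_activePt : ∀ k, D.shift k • D.activePt k = D.activePt k
  | 0 => D.σ_smul_c 0
  | k + 1 => by
    funext p
    refine (levelHom_smul_apply _ _ p).trans ?_
    by_cases hp : D.QuietSim k p (D.quietPt k)
    · rw [if_pos hp, D.activePt_succ_apply hp, D.σ_smul_c]
    · rw [if_neg hp, one_smul]

theorem not_quietSim_shift_smul_quietPt :
    ∀ {k j : ℕ}, k ≤ j → ¬D.QuietSim j (D.shift k • D.quietPt j) (D.quietPt j) := by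
  intro k j hkj
  induction j, hkj using Nat.le_induction with
  | base =>
    cases k with
    | zero => exact fun h => D.σ_smul_x_ne 0 h.1
    | succ k =>
      intro h
      have hq := D.quietSim_quietPt k
      have h_eq := (h _ _ hq).1
      rw [shift, levelHom_smul_apply, if_pos hq, D.quietPt_succ_apply hq] at h_eq
      exact D.σ_smul_x_ne _ h_eq
  | succ j hkj ih =>
    intro h
    have hq := D.quietSim_quietPt j
    have h_eq := (h _ _ (((D.compat_shift k j).quietSim_iff _ _).2 hq)).1
    rw [smul_apply_of_mem_finitary (finitary_mono hkj (D.shift_mem_finitary k)), inv_smul_smul,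
      D.quietPt_succ_apply hq, D.quietPt_succ_apply_of_not ih] at h_eq
    exact D.σ_smul_x_ne _ h_eq.symm

theorem not_sim_shift_smul_activePt {j : ℕ} (hkj : k < j) {p : Point S j}
    (hp : p ∈ D.activeSet j) : ¬D.Sim j p (D.shift k • D.activePt j) := by
  obtain ⟨j, rfl⟩ := Nat.exists_eq_succ_of_ne_zero hkj.ne_bot
  intro h
  have hq := D.quietSim_quietPt j
  have hkj : k ≤ j := Nat.le_of_lt_succ hkj
  have h_moved : ¬D.QuietSim j ((D.shift k)⁻¹ • D.quietPt j) (D.quietPt j) := by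
    rw [← (D.compat_shift k j).quietSim_iff, smul_inv_smul]
    exact fun h => D.not_quietSim_shift_smul_quietPt hkj h.symm
  have h_eq := (hp _ _ hq).symm.trans (h _ _ hq)
  rw [smul_apply_of_mem_finitary (finitary_mono hkj (D.shift_mem_finitary k)),
    D.activePt_succ_apply hq, D.activePt_succ_apply_of_not h_moved] at h_eq
  exact D.σ_smul_x_ne_c _ h_eq.symm

theorem not_quietSim_shift_smul_activePt (k j : ℕ) :
    ¬D.QuietSim j (D.shift k • D.activePt j) (D.shift k • D.activePt j) :=
  mt ((D.compat_shift k j).quietSim_iff _ _).1 (D.not_quietSim_activePt j)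

open Classical in
theorem conj_shift_gen {X : ∀ j, (S (j + 1)).grp} (hX : ∀ j < k, X j = 1) :
    D.shift k * D.gen X * (D.shift k)⁻¹ = D.quietHom (D.simHom
      (fun j => D.shift k • D.activePt j) (D.not_quietSim_shift_smul_activePt k) X) := by
  refine (conj_ofPortrait (D.shift_mem_finitary k) fun j hj => ?_).trans ?_
  · funext p
    simp [simHom, hX j hj]
  · refine congrArg (ofPortrait 1) (funext fun j => funext fun p => ?_)
    have h := (D.compat_shift k j).sim_iff ((D.shift k)⁻¹ • p) (D.activePt j)
    rw [smul_inv_smul] at h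
    exact if_congr h.symm rfl rfl

open Classical in
open scoped commutatorElement in
theorem commutator_gen_conj_shift_gen {X Y : ∀ j, (S (j + 1)).grp}
    (hX : ∀ j < k, X j = 1) (hY : ∀ j < k, Y j = 1) :
    ⁅D.gen X, D.shift k * D.gen Y * (D.shift k)⁻¹⁆ = D.gen (Pi.mulSingle k ⁅X k, Y k⁆) := by
  rw [D.conj_shift_gen hY, gen, MonoidHom.comp_apply, MonoidHom.comp_apply,
    ← map_commutatorElement]
  congr 1
  ext j p : 3
  change ⁅if D.Sim j p (D.activePt j) then X j else 1,
      if D.Sim j p (D.shift k • D.activePt j) then Y j else 1⁆ =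
    if D.Sim j p (D.activePt j) then (Pi.mulSingle k ⁅X k, Y k⁆ : ∀ j, (S (j + 1)).grp) j else 1
  rcases lt_trichotomy j k with hj | rfl | hj
  · simp [hX j hj, hj.ne]
  · rw [D.shift_smul_activePt]
    split_ifs <;> simp
  · by_cases hp : D.Sim j p (D.activePt j)
    · simp [D.not_sim_shift_smul_activePt hj hp, hj.ne']
    · rw [if_neg hp, if_neg hp, commutatorElement_one_left]

end Shift

section Generation

/-- The parameters `X` of a directed generator with the entries below `k` made trivial. -/
def tail (k : ℕ) (X : ∀ j, (S (j + 1)).grp) : ∀ j, (S (j + 1)).grp :=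
  fun j => if k ≤ j then X j else 1

theorem tail_zero (X : ∀ j, (S (j + 1)).grp) : tail 0 X = X :=
  funext fun j => if_pos j.zero_le

theorem tail_of_lt (X : ∀ j, (S (j + 1)).grp) {j : ℕ} (hj : j < k) : tail k X j = 1 :=
  if_neg hj.not_ge

theorem tail_self (X : ∀ j, (S (j + 1)).grp) : tail k X k = X k :=
  if_pos le_rfl

theorem mulSingle_mul_tail_succ (X : ∀ j, (S (j + 1)).grp) :
    Pi.mulSingle k (X k) * tail (k + 1) X = tail k X := by
  funext j
  rcases lt_trichotomy j k with hj | rfl | hj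
  · simp [tail, hj.ne, hj.not_ge, (hj.trans k.lt_succ_self).not_ge]
  · simp [tail]
  · simp [tail, hj.ne', hj.le, Nat.succ_le_of_lt hj]

theorem exists_mem_finitary_separating
    [∀ k, MulAction.IsPretransitive (S k).grp (S k).carrier] : ∀ {k : ℕ} {p q : Point S k},
    q ≠ p → ∃ γ ∈ finitary S k, γ • p ∈ D.activeSet k ∧ γ • q ∉ D.activeSet k
  | 0, p, q, hpq => by
    obtain ⟨γ, hγ, hp⟩ := exists_mem_finitary_smul_eq 0 p (D.activePt 0)
    exact ⟨γ, hγ, hp, fun hq => hpq (smul_left_cancel γ (Eq.trans hq hp.symm))⟩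
  | k + 1, f, g, hfg => by
    obtain ⟨t, ht⟩ := Function.ne_iff.1 hfg
    obtain ⟨γ, hγ, hγt⟩ := exists_mem_finitary_smul_eq k t (D.quietPt k)
    choose b hb using fun z =>
      MulAction.exists_smul_eq (S (k + 1)).grp ((γ • f) z) (D.activePt (k + 1) z)
    have hf : (levelHom k b * γ) • f = D.activePt (k + 1) := by
      rw [mul_smul]
      exact funext fun z => (levelHom_smul_apply b _ z).trans (hb z)
    refine ⟨levelHom k b * γ,
      mul_mem (levelHom_mem_finitary b) (finitary_mono k.le_succ hγ), ?_, fun hg => ht ?_⟩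
    · exact hf ▸ D.activePt_mem_activeSet (k + 1)
    · have h := hg _ _ (D.quietSim_quietPt k)
      rw [← hf, mul_smul, mul_smul, levelHom_smul_apply, levelHom_smul_apply,
        smul_left_cancel_iff, smul_apply_of_mem_finitary hγ, smul_apply_of_mem_finitary hγ,
        inv_smul_eq_iff.2 hγt.symm] at h
      exact h

variable {ι : Type*} {X : ι → ∀ j, (S (j + 1)).grp} {H : Subgroup (iterLimit S)}

theorem gen_mulSingle_mem (hperf : commutator (S (k + 1)).grp = ⊤)
    (hX : Subgroup.closure (Set.range fun i => X i k) = ⊤) (hfin : finitary S k ≤ H)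
    (hgen : ∀ i, D.gen (tail k (X i)) ∈ H) (s : (S (k + 1)).grp) :
    D.gen (Pi.mulSingle k s) ∈ H := by
  let N : Subgroup (S (k + 1)).grp :=
    H.comap (D.gen.comp (MonoidHom.mulSingle (fun j => (S (j + 1)).grp) k))
  have h_shift := hfin (D.shift_mem_finitary k)
  suffices h : commutator (S (k + 1)).grp ≤ N from h (hperf ▸ Subgroup.mem_top s)
  refine commutator_le_of_closure_range_eq_top hX (fun i j => ?_) fun i => ?_
  · have h := D.commutator_gen_conj_shift_gen (k := k) (X := tail k (X i)) (Y := tail k (X j))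
      (fun _ => tail_of_lt _) (fun _ => tail_of_lt _)
    rw [tail_self, tail_self] at h
    change D.gen (Pi.mulSingle k _) ∈ H
    rw [← h, commutatorElement_def]
    have h_conj := mul_mem (mul_mem h_shift (hgen j)) (inv_mem h_shift)
    exact mul_mem (mul_mem (mul_mem (hgen i) h_conj) (inv_mem (hgen i))) (inv_mem h_conj)
  · refine Subgroup.mem_normalizer_iff.2 fun s => ?_
    have h_conj : D.gen (Pi.mulSingle k (X i k * s * (X i k)⁻¹)) =
        D.gen (tail k (X i)) * D.gen (Pi.mulSingle k s) * (D.gen (tail k (X i)))⁻¹ := by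
      rw [← map_mul, ← map_inv, ← map_mul]
      congr 1
      funext j
      rcases eq_or_ne j k with rfl | hj
      · simp [tail]
      · simp [hj]
    change D.gen (Pi.mulSingle k s) ∈ H ↔ D.gen (Pi.mulSingle k _) ∈ H
    rw [h_conj, Subgroup.mul_mem_cancel_right _ (inv_mem (hgen i)),
      Subgroup.mul_mem_cancel_left _ (hgen i)]

theorem levelHom_mem [Finite (Point S k)]
    [∀ k, MulAction.IsPretransitive (S k).grp (S k).carrier]
    (hperf : commutator (S (k + 1)).grp = ⊤) (hfin : finitary S k ≤ H)
    (hgen : ∀ s, D.gen (Pi.mulSingle k s) ∈ H) (b : Point S k → (S (k + 1)).grp) :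
    levelHom k b ∈ H := by
  have := D.nontrivial_point k
  suffices h : H.comap (levelHom k) = ⊤ from h.ge (Subgroup.mem_top b)
  refine pi_subgroup_eq_top_of_separating hperf fun p q hpq => ?_
  obtain ⟨γ, hγ, hp, hq⟩ := D.exists_mem_finitary_separating hpq
  refine ⟨(γ • ·) ⁻¹' D.activeSet k, hp, hq, fun s => ?_⟩
  have h_conj := conj_levelHom (inv_mem hγ) ((D.activeSet k).mulIndicator (Function.const _ s))
  rw [inv_inv] at h_conj
  change levelHom k (fun p => (D.activeSet k).mulIndicator (Function.const _ s) (γ • p)) ∈ H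
  rw [← h_conj, ← gen_mulSingle]
  exact mul_mem (mul_mem (hfin (inv_mem hγ)) (hgen s)) (hfin hγ)

theorem finitary_le_of_gen_mem [∀ k, Finite (S k).carrier]
    [∀ k, MulAction.IsPretransitive (S k).grp (S k).carrier]
    (hperf : ∀ k, commutator (S (k + 1)).grp = ⊤)
    (hX : ∀ k, Subgroup.closure (Set.range fun i => X i k) = ⊤)
    (hroot : ∀ s, rootHom s ∈ H) (hgen : ∀ i, D.gen (X i) ∈ H) (k : ℕ) : finitary S k ≤ H := by
  suffices finitary S k ≤ H ∧ ∀ i, D.gen (tail k (X i)) ∈ H from this.1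
  induction k with
  | zero =>
    refine ⟨?_, fun i => (tail_zero (X i)).symm ▸ hgen i⟩
    rw [finitary_zero]
    rintro _ ⟨s, rfl⟩
    exact hroot s
  | succ k ih =>
    have h_single := D.gen_mulSingle_mem (hperf k) (hX k) ih.1 ih.2
    refine ⟨finitary_succ_le ih.1 (D.levelHom_mem (hperf k) ih.1 h_single), fun i => ?_⟩
    rw [← Subgroup.mul_mem_cancel_left _ (h_single (X i k)), ← map_mul, mulSingle_mul_tail_succ]
    exact ih.2 i

end Generation

end BasePoints

theorem theoremA_general (d : ℕ) (S : ℕ → PermGroup) [∀ k, Finite (S k).carrier]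
    (htrans : ∀ k, ∀ x y : (S k).carrier, ∃ σ ∈ (S k).grp, σ x = y)
    (hperf : ∀ k, commutator (S (k + 1)).grp = ⊤)
    (hgen : ∀ k, ∃ T : Finset (S (k + 1)).grp,
      T.card ≤ d ∧ Subgroup.closure (T : Set (S (k + 1)).grp) = ⊤)
    (hstab : ∀ k, ∃ i j : (S k).carrier,
      {σ : Perm (S k).carrier | σ ∈ (S k).grp ∧ σ i = i} ≠
        {σ : Perm (S k).carrier | σ ∈ (S k).grp ∧ σ j = j}) :
    ∃ g : Fin (d + minGens (S 0).grp) → iterLimit S,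
      Dense (Subgroup.closure (Set.range g) : Set (iterLimit S)) := by
  have (k : ℕ) : MulAction.IsPretransitive (S k).grp (S k).carrier :=
    ⟨fun x y => (htrans k x y).elim fun σ h => ⟨⟨σ, h.1⟩, h.2⟩⟩
  obtain ⟨D⟩ := BasePoints.nonempty_of_setOf_fixing_ne hstab
  choose X hX using fun k =>
    (hgen k).elim fun T h => exists_fin_closure_range_eq_top h.1 h.2
  obtain ⟨t, ht⟩ : ∃ t : Fin (minGens (S 0).grp) → (iterExpP S 0).grp,
      Subgroup.closure (Set.range t) = ⊤ := exists_fin_minGens_closure_range_eq_top (S 0).grp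
  let g := Fin.append (fun i => D.gen fun j => X j i) fun i => iterLimit.rootHom (t i)
  have h_gen (i : Fin d) : D.gen (fun j => X j i) ∈ Subgroup.closure (Set.range g) :=
    Subgroup.subset_closure ⟨Fin.castAdd _ i, Fin.append_left _ _ i⟩
  have h_root (i) : iterLimit.rootHom (t i) ∈ Subgroup.closure (Set.range g) :=
    Subgroup.subset_closure ⟨Fin.natAdd d i, Fin.append_right _ _ i⟩
  have h_closure : Subgroup.closure (Set.range t) ≤
      (Subgroup.closure (Set.range g)).comap iterLimit.rootHom :=
    (Subgroup.closure_le _).2 (Set.range_subset_iff.2 h_root)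
  exact ⟨g, iterLimit.dense_of_finitary_le (D.finitary_le_of_gen_mem hperf hX
    (fun s => h_closure (ht ▸ Subgroup.mem_top s)) h_gen)⟩

/-- **Theorem A.** -/
theorem theoremA (d : ℕ) (hd : 0 < d) (m : ℕ → ℕ)
    (S : ∀ k, Subgroup (Perm (Fin (m k))))
    (htrans : ∀ k, ∀ x y : Fin (m k), ∃ σ ∈ S k, σ x = y)
    (hperf : ∀ k, commutator (S k) = ⊤)
    (hgen : ∀ k, ∃ T : Finset (S k), T.card ≤ d ∧ Subgroup.closure (T : Set (S k)) = ⊤)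
    (hstab : ∀ k, ∃ i j : Fin (m k),
      {σ : Perm (Fin (m k)) | σ ∈ S k ∧ σ i = i} ≠ {σ : Perm (Fin (m k)) | σ ∈ S k ∧ σ j = j}) :
    ∃ g : Fin (d + minGens (S 0)) → (iterLimit (fun k => ⟨Fin (m k), S k⟩)),
      Dense ((Subgroup.closure (Set.range g) :
        Subgroup (iterLimit (fun k => ⟨Fin (m k), S k⟩))) :
          Set (iterLimit (fun k => ⟨Fin (m k), S k⟩))) :=
  have (k : ℕ) : Finite ((fun k => ⟨Fin (m k), S k⟩ : ℕ → PermGroup) k).carrier :=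
    inferInstanceAs (Finite (Fin (m k)))
  theoremA_general d (fun k => ⟨Fin (m k), S k⟩) htrans (fun k => hperf (k + 1))
    (fun k => hgen (k + 1)) hstab
end

section
/- Let d and n be positive integers and let S = {S_k ≤ Sym({1,…,m_k})}_{k=1,…,n} be a finite sequence of finite transitive permutation groups such that each S_k is perfect and can be generated by at most d elements, and such that for every k ∈ {1,…,n} there exist points i, j ∈ {1,…,m_k} with St_{S_k}(i) ≠ St_{S_k}(j). Then the iterated exponentiation S̃_n is generated by d + d(S_1) elements; in particular S̃_n is generated by a generating set of S_1 (viewed inside S̃_n as the bottom group) together with d further elements. -/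
open Equiv

/-- The embedding of permutations of the bottom set into the iterated exponentiation:
a permutation `π` of the bottom set gives the permutation `(e,…,e)·π` at every level. -/
def botMap (S : ℕ → PermGroup) : (k : ℕ) → Perm ((S 0).carrier) → Perm ((iterExpP S k).carrier)
  | 0 => fun π => π
  | k + 1 => fun π => prodPerm (fun _ => (1 : Perm ((S (k + 1)).carrier))) (botMap S k π)

/-!
By induction on `k`, the wreath product `S (k + 1) ≀ iterExpP S k` is generated by the elements of
`S 0`, with trivial labels, together with `d` intransitive elements that carry the generators of
`S (k + 1)` as labels, each at a single point. In the product action these `d` elements become the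
permutations underlying the next `d` elements, and only the points that carry the next labels are
still to be chosen.

Let `H` be the subgroup generated at the next level, inside `C ≀ G` with `G = A ≀ B` acting on
`X = β → α`. Any two points of `X` are joined by an element of `H` with trivial label, and the
power of a labelled element that first returns to its labelled point has a generator of `C` as
label there. By Goursat's argument for perfect groups, `H` contains the base group as soon as

* the elements of `H` in the base group take all values at each point. At a constant point the
  stabilizer in `G` is itself a wreath product, and its commutator subgroup lies in the normal
  closure of elements that lift to `H` with trivial label, so this follows from perfectness of `C`;
* those that are trivial at `y` take all values at `x`, for all `y ≠ x`. Taking commutators, it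
  suffices that each generator of `C` is, up to conjugation, the label at `x` of an element of `H`
  that fixes `x` and `y` and has trivial label at `y`. Once `x` is moved to a labelled point, a
  power of the labelled element will do if its cycle through `x` avoids `y` and has a period of `y`
  as its length. Both are forced by choosing the labelled point in `β → α` so that on the cycles of
  the underlying permutation of `β` it takes a value `u` once and `u'` elsewhere, where the
  stabilizer of `u` is not contained in that of `u'`.
-/

open scoped commutatorElement

/-! ### Perfect groups and Goursat's argument -/

section PerfectGroups

variable {A L M : Type*} [Group A] [Group L] [Group M]

theorem eq_top_of_commutators_mem [Group.IsPerfect A] {N : Subgroup A}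
    (h : ∀ a b : A, ⁅a, b⁆ ∈ N) : N = ⊤ := by
  rw [eq_top_iff, ← Group.IsPerfect.commutator_eq_top, commutator_def, Subgroup.commutator_le]
  exact fun a _ b _ => h a b

theorem eq_top_of_commutators_generators_mem [Group.IsPerfect A] {N : Subgroup A} [N.Normal]
    {s : Set A} (hs : Subgroup.normalClosure s = ⊤) (h : ∀ t ∈ s, ∀ a, ⁅t, a⁆ ∈ N) : N = ⊤ := by
  have hcentral : (Subgroup.center (A ⧸ N)).comap (QuotientGroup.mk' N) = ⊤ := by
    rw [eq_top_iff, ← hs]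
    refine Subgroup.normalClosure_le_normal fun t ht => Subgroup.mem_center_iff.2 fun b => ?_
    obtain ⟨a, rfl⟩ := QuotientGroup.mk'_surjective N b
    rw [eq_comm, ← commutatorElement_eq_one_iff_mul_comm, ← map_commutatorElement]
    exact (QuotientGroup.eq_one_iff _).2 (h t ht a)
  refine eq_top_of_commutators_mem fun a b => (QuotientGroup.eq_one_iff _).1 ?_
  have ha : (a : A ⧸ N) ∈ Subgroup.center (A ⧸ N) := hcentral.ge (Subgroup.mem_top a)
  rw [← QuotientGroup.mk'_apply, map_commutatorElement, commutatorElement_eq_one_iff_mul_comm]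
  exact (Subgroup.mem_center_iff.1 ha _).symm

theorem map_ker_eq_top [Group.IsPerfect A] {π : L →* M} {label : L →* A}
    (hlabel : Function.Surjective label) (hπ : commutator M ≤ label.ker.map π) :
    π.ker.map label = ⊤ := by
  refine eq_top_of_commutators_mem fun a b => ?_
  obtain ⟨l, rfl⟩ := hlabel a
  obtain ⟨l', rfl⟩ := hlabel b
  obtain ⟨k, hk, hkl⟩ : ⁅π l, π l'⁆ ∈ label.ker.map π :=
    hπ (Subgroup.commutator_mem_commutator (Subgroup.mem_top _) (Subgroup.mem_top _))
  refine ⟨⁅l, l'⁆ * k⁻¹, ?_, ?_⟩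
  · rw [SetLike.mem_coe, MonoidHom.mem_ker, map_mul, map_commutatorElement, map_inv, hkl,
      mul_inv_cancel]
  · rw [map_mul, map_commutatorElement, map_inv, MonoidHom.mem_ker.1 hk, inv_one, mul_one]

end PerfectGroups

section Goursat

variable {ι : Type*} {A : ι → Type*} [∀ i, Group (A i)]

/-- The values at `i` of those elements of a subgroup `K` of a product of groups that are trivial
on all the coordinates in `F`. -/
def valuesTrivialOn (K : Subgroup (∀ i, A i)) (F : Set ι) (i : ι) : Subgroup (A i) :=
  (K ⊓ Subgroup.pi F fun _ => ⊥).map (Pi.evalMonoidHom A i)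

variable {K : Subgroup (∀ i, A i)} {F F' : Set ι} {i j : ι}

theorem mem_valuesTrivialOn {a : A i} :
    a ∈ valuesTrivialOn K F i ↔ ∃ k ∈ K, (∀ j ∈ F, k j = 1) ∧ k i = a := by
  simp only [valuesTrivialOn, Subgroup.mem_map, Subgroup.mem_inf, Subgroup.mem_pi,
    Subgroup.mem_bot, and_assoc, Pi.evalMonoidHom_apply]

theorem mem_valuesTrivialOn_singleton {a : A i} :
    a ∈ valuesTrivialOn K {j} i ↔ ∃ k ∈ K, k j = 1 ∧ k i = a := by
  simp only [mem_valuesTrivialOn, Set.mem_singleton_iff, forall_eq]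

theorem exists_mem_apply_eq (h : valuesTrivialOn K ∅ i = ⊤) (a : A i) : ∃ k ∈ K, k i = a := by
  obtain ⟨k, hk, -, ha⟩ := mem_valuesTrivialOn.1 (h.ge (Subgroup.mem_top a))
  exact ⟨k, hk, ha⟩

theorem valuesTrivialOn_empty_eq_top (h : ∀ a : A i, ∃ k ∈ K, k i = a) :
    valuesTrivialOn K ∅ i = ⊤ := by
  refine (Subgroup.eq_top_iff' _).2 fun a => mem_valuesTrivialOn.2 ?_
  obtain ⟨k, hk, ha⟩ := h a
  exact ⟨k, hk, fun _ hj => hj.elim, ha⟩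

theorem normal_valuesTrivialOn (h : valuesTrivialOn K ∅ i = ⊤) :
    (valuesTrivialOn K F i).Normal where
  conj_mem a ha b := by
    obtain ⟨k, hk, hkF, rfl⟩ := mem_valuesTrivialOn.1 ha
    obtain ⟨l, hl, rfl⟩ := exists_mem_apply_eq h b
    refine mem_valuesTrivialOn.2 ⟨l * k * l⁻¹, K.mul_mem (K.mul_mem hl hk) (K.inv_mem hl), ?_, rfl⟩
    intro j hj
    simp only [Pi.mul_apply, Pi.inv_apply, hkF j hj, mul_one, mul_inv_cancel]

theorem commutator_valuesTrivialOn_le :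
    ⁅valuesTrivialOn K F i, valuesTrivialOn K F' i⁆ ≤ valuesTrivialOn K (F ∪ F') i := by
  rw [Subgroup.commutator_le]
  intro a ha b hb
  obtain ⟨k, hk, hkF, rfl⟩ := mem_valuesTrivialOn.1 ha
  obtain ⟨l, hl, hlF, rfl⟩ := mem_valuesTrivialOn.1 hb
  refine mem_valuesTrivialOn.2 ⟨⁅k, l⁆, K.mul_mem (K.mul_mem (K.mul_mem hk hl) (K.inv_mem hk))
    (K.inv_mem hl), ?_, rfl⟩
  rintro j (hj | hj) <;> simp [commutatorElement_def, hkF, hlF, hj]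

theorem valuesTrivialOn_union_eq_top [Group.IsPerfect (A i)] (h : valuesTrivialOn K F i = ⊤)
    (h' : valuesTrivialOn K F' i = ⊤) : valuesTrivialOn K (F ∪ F') i = ⊤ := by
  rw [eq_top_iff, ← Group.IsPerfect.commutator_eq_top, commutator_def]
  simpa only [h, h'] using commutator_valuesTrivialOn_le (K := K) (F := F) (F' := F') (i := i)

theorem valuesTrivialOn_singleton_eq_top_symm (h : valuesTrivialOn K {j} i = ⊤)
    (hj : valuesTrivialOn K ∅ j = ⊤) : valuesTrivialOn K {i} j = ⊤ := by
  refine (Subgroup.eq_top_iff' _).2 fun a => mem_valuesTrivialOn_singleton.2 ?_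
  obtain ⟨k, hk, rfl⟩ := exists_mem_apply_eq hj a
  obtain ⟨l, hl, hlj, hli⟩ := mem_valuesTrivialOn_singleton.1 (h.ge (Subgroup.mem_top (k i)))
  exact ⟨k * l⁻¹, K.mul_mem hk (K.inv_mem hl), by simp [hli], by simp [hlj]⟩

theorem valuesTrivialOn_singleton_eq_top_of_le {j' : ι}
    (hle : valuesTrivialOn K {j} i ≤ valuesTrivialOn K {j'} i)
    (h : valuesTrivialOn K {j} j' = ⊤) : valuesTrivialOn K {i} j' = ⊤ := by
  refine (Subgroup.eq_top_iff' _).2 fun a => mem_valuesTrivialOn_singleton.2 ?_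
  obtain ⟨k, hk, hkj, rfl⟩ := mem_valuesTrivialOn_singleton.1 (h.ge (Subgroup.mem_top a))
  obtain ⟨l, hl, hlj, hli⟩ := mem_valuesTrivialOn_singleton.1
    (hle (mem_valuesTrivialOn_singleton.2 ⟨k, hk, hkj, rfl⟩))
  exact ⟨k * l⁻¹, K.mul_mem hk (K.inv_mem hl), by simp [hli], by simp [hlj]⟩

theorem valuesTrivialOn_finset_eq_top [Group.IsPerfect (A i)]
    (h₀ : valuesTrivialOn K ∅ i = ⊤) (h : ∀ j ≠ i, valuesTrivialOn K {j} i = ⊤)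
    (s : Finset ι) (hs : i ∉ s) : valuesTrivialOn K s i = ⊤ := by
  classical
  induction s using Finset.induction_on with
  | empty => rwa [Finset.coe_empty]
  | insert j s _ ih =>
    rw [Finset.mem_insert, not_or] at hs
    rw [Finset.coe_insert, Set.insert_eq]
    exact valuesTrivialOn_union_eq_top (h j (Ne.symm hs.1)) (ih hs.2)

theorem eq_top_of_valuesTrivialOn_eq_top [Finite ι] [∀ i, Group.IsPerfect (A i)]
    (h₀ : ∀ i, valuesTrivialOn K ∅ i = ⊤)
    (h : ∀ i j, i ≠ j → valuesTrivialOn K {i} j = ⊤) : K = ⊤ := by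
  classical
  have := Fintype.ofFinite ι
  refine (Subgroup.eq_top_iff' K).2 fun a => Subgroup.pi_mem_of_mulSingle_mem a fun i => ?_
  have htop := valuesTrivialOn_finset_eq_top (h₀ i) (fun j hj => h j i hj) (Finset.univ.erase i)
    (Finset.notMem_erase i _)
  obtain ⟨k, hk, hks, hki⟩ := mem_valuesTrivialOn.1 (htop.ge (Subgroup.mem_top (a i)))
  convert hk
  funext j
  obtain rfl | hj := eq_or_ne j i
  · rw [Pi.mulSingle_eq_same, hki]
  · rw [Pi.mulSingle_eq_of_ne hj, hks j (by simpa using hj)]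

end Goursat

theorem commute_map_of_commute_mulSingle {ι M : Type*} {A : ι → Type*} [Finite ι] [DecidableEq ι]
    [∀ i, Group (A i)] [Group M] (f : (∀ i, A i) →* M) {m : M}
    (h : ∀ i a, Commute (f (Pi.mulSingle i a)) m) (k : ∀ i, A i) : Commute (f k) m := by
  have hk : k ∈ (Subgroup.centralizer {m}).comap f :=
    Subgroup.pi_mem_of_mulSingle_mem k fun i =>
      Subgroup.mem_centralizer_singleton_iff.2 (h i (k i)).eq
  exact Subgroup.mem_centralizer_singleton_iff.1 hk

section Orbits

open MulAction

variable {G X : Type*} [Group G] [MulAction G X] {g : G} {x y z : X}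

theorem notMem_orbit_of_mem_orbit (hx : x ∉ orbit G z) (hy : y ∈ orbit G x) : y ∉ orbit G z :=
  fun h => hx (orbit_eq_iff.2 h ▸ mem_orbit_symm.1 hy)

theorem period_pos_of_finite [Finite X] (g : G) (x : X) : 0 < period g x :=
  Function.minimalPeriod_pos_of_mem_periodicPts ((MulAction.injective g).mem_periodicPts x)

theorem mem_orbit_zpowers_iff :
    y ∈ orbit (Subgroup.zpowers g) x ↔ ∃ k : ℤ, g ^ k • x = y := by
  simp only [mem_orbit_iff, Subtype.exists, Subgroup.mem_zpowers_iff, Subgroup.mk_smul]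
  constructor
  · rintro ⟨_, ⟨k, rfl⟩, h⟩
    exact ⟨k, h⟩
  · rintro ⟨k, h⟩
    exact ⟨_, ⟨k, rfl⟩, h⟩

theorem zpow_smul_mem_orbit_zpowers_iff (n : ℤ) :
    g ^ n • y ∈ orbit (Subgroup.zpowers g) x ↔ y ∈ orbit (Subgroup.zpowers g) x := by
  simp only [mem_orbit_zpowers_iff]
  constructor
  · rintro ⟨k, h⟩
    exact ⟨-n + k, by rw [zpow_add, mul_smul, h, zpow_neg, inv_smul_smul]⟩
  · rintro ⟨k, rfl⟩
    exact ⟨n + k, by rw [zpow_add, mul_smul]⟩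

theorem zpow_smul_eq_of_mem_orbit {k : ℤ} (hx : g ^ k • x = x)
    (hxy : x ∈ orbit (Subgroup.zpowers g) y) : g ^ k • y = y := by
  obtain ⟨l, rfl⟩ := mem_orbit_zpowers_iff.1 (mem_orbit_symm.1 hxy)
  rw [smul_smul, ← zpow_add, add_comm, zpow_add, mul_smul, hx]

end Orbits

/-! ### Labels in a permutational wreath product -/

/-- The permutational wreath product `A ≀ G` of a group `A` with a group `G` acting on `X`. -/
abbrev PermWreath (A G X : Type*) [Group A] [Group G] [MulAction G X] : Type _ :=
  (X → A) ⋊[mulAutArrow (A := X) (M := A)] G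

namespace PermWreath

open SemidirectProduct MulAction

variable {A G X : Type*} [Group A] [Group G] [MulAction G X]

theorem mulAutArrow_apply_eq (g : G) (f : X → A) (x : X) :
    mulAutArrow (A := X) (M := A) g f x = f (g⁻¹ • x) := rfl

/-- The element of `A` that `w` applies on its way from `x` to `w.right • x`. -/
def label (w : PermWreath A G X) (x : X) : A := w.left (w.right • x)

@[simp]
theorem label_one (x : X) : label (1 : PermWreath A G X) x = 1 := rfl

@[simp]
theorem label_inr (g : G) (x : X) : label (inr g : PermWreath A G X) x = 1 := rfl

@[simp]
theorem label_inl (f : X → A) (x : X) : label (inl f : PermWreath A G X) x = f x := by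
  simp only [label, left_inl, right_inl, one_smul]

theorem label_mul (v w : PermWreath A G X) (x : X) :
    label (v * w) x = label v (w.right • x) * label w x := by
  simp only [label, mul_left, mul_right, Pi.mul_apply, mulAutArrow_apply_eq, mul_smul,
    inv_smul_smul]

theorem label_inv_smul (w : PermWreath A G X) (x : X) :
    label w⁻¹ (w.right • x) = (label w x)⁻¹ := by
  simp only [label, inv_left, inv_right, mulAutArrow_apply_eq, Pi.inv_apply, inv_inv,
    inv_smul_smul]

theorem label_conj_inl (w : PermWreath A G X) (f : X → A) (x : X) :
    label (w * inl f * w⁻¹) (w.right • x) = label w x * f x * (label w x)⁻¹ := by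
  simp only [label_mul, inv_right, inv_smul_smul, right_inl, one_smul, label_inl, label_inv_smul]

theorem inl_label_of_right_eq_one {w : PermWreath A G X} (hw : w.right = 1) :
    inl (label w) = w := by
  ext x
  · simp only [label, hw, one_smul, left_inl]
  · rw [right_inl, hw]

variable {H : Subgroup (PermWreath A G X)} {x y z : X}

/-- The intersection of a subgroup of `A ≀ G` with the base group `X → A`. -/
def base (H : Subgroup (PermWreath A G X)) : Subgroup (X → A) :=
  H.comap inl

theorem label_mem_base {w : PermWreath A G X} (hw : w ∈ H) (h1 : w.right = 1) :
    label w ∈ base H := by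
  rwa [base, Subgroup.mem_comap, inl_label_of_right_eq_one h1]

theorem exists_mem_base_conj {w : PermWreath A G X} (hw : w ∈ H) {f : X → A} (hf : f ∈ base H) :
    ∃ f' ∈ base H, ∀ x, f' (w.right • x) = label w x * f x * (label w x)⁻¹ :=
  ⟨label (w * inl f * w⁻¹),
    label_mem_base (H.mul_mem (H.mul_mem hw hf) (H.inv_mem hw)) (by simp), label_conj_inl w f⟩

theorem valuesTrivialOn_base_le {w : PermWreath A G X} (hw : w ∈ H) (hwx : w.right • x = x)
    (hx : valuesTrivialOn (base H) ∅ x = ⊤) :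
    valuesTrivialOn (base H) {y} x ≤ valuesTrivialOn (base H) {w.right • y} x := by
  intro a ha
  have hnormal := normal_valuesTrivialOn (F := {y}) hx
  obtain ⟨f, hf, hfy, hfx⟩ :=
    mem_valuesTrivialOn_singleton.1 (hnormal.conj_mem a ha (label w x)⁻¹)
  obtain ⟨f', hf', h⟩ := exists_mem_base_conj hw hf
  refine mem_valuesTrivialOn_singleton.2 ⟨f', hf', by simp [h, hfy], ?_⟩
  rw [← hwx, h, hfx]
  group

/-! ### Flat connectivity and loops -/

/-- `y` is reached from `x` by an element of `H` with trivial label at `x`. -/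
def Flat (H : Subgroup (PermWreath A G X)) (x y : X) : Prop :=
  ∃ h ∈ H, h.right • x = y ∧ label h x = 1

theorem Flat.refl (x : X) : Flat H x x := ⟨1, H.one_mem, one_smul G x, rfl⟩

theorem Flat.symm : Flat H x y → Flat H y x := by
  rintro ⟨h, hh, rfl, hx⟩
  exact ⟨h⁻¹, H.inv_mem hh, inv_smul_smul _ _, by rw [label_inv_smul, hx, inv_one]⟩

theorem Flat.trans : Flat H x y → Flat H y z → Flat H x z := by
  rintro ⟨h, hh, rfl, hx⟩ ⟨k, hk, rfl, hy⟩
  exact ⟨k * h, H.mul_mem hk hh, mul_smul _ _ _, by rw [label_mul, hx, hy, one_mul]⟩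

theorem Flat.valuesTrivialOn_empty (h : Flat H x y)
    (hx : valuesTrivialOn (base H) ∅ x = ⊤) : valuesTrivialOn (base H) ∅ y = ⊤ := by
  obtain ⟨w, hw, rfl, hwx⟩ := h
  refine valuesTrivialOn_empty_eq_top fun a => ?_
  obtain ⟨f, hf, rfl⟩ := exists_mem_apply_eq hx a
  obtain ⟨f', hf', h'⟩ := exists_mem_base_conj hw hf
  exact ⟨f', hf', by rw [h', hwx, one_mul, inv_one, mul_one]⟩

/-- The elements of `H` whose permutation part fixes `x`. -/
def loops (H : Subgroup (PermWreath A G X)) (x : X) : Subgroup (PermWreath A G X) :=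
  H ⊓ (stabilizer G x).comap rightHom

theorem mem_loops {w : PermWreath A G X} : w ∈ loops H x ↔ w ∈ H ∧ w.right • x = x := Iff.rfl

/-- The label at `x`, as a homomorphism on the loops at `x`. -/
def loopLabel (H : Subgroup (PermWreath A G X)) (x : X) : loops H x →* A where
  toFun w := label w.1 x
  map_one' := label_one x
  map_mul' v w := by
    rw [Subgroup.coe_mul, label_mul, (mem_loops.1 w.2).2]

/-- The permutation part, as a homomorphism from the loops at `x` to the stabilizer of `x`. -/
def loopRight (H : Subgroup (PermWreath A G X)) (x : X) : loops H x →* stabilizer G x :=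
  (rightHom.comp (loops H x).subtype).codRestrict _ fun w => (mem_loops.1 w.2).2

theorem Flat.range_loopLabel_le (h : Flat H x y) :
    (loopLabel H x).range ≤ (loopLabel H y).range := by
  rintro _ ⟨⟨l, hl⟩, rfl⟩
  obtain ⟨w, hw, rfl, hwx⟩ := h
  obtain ⟨hlH, hlx⟩ := mem_loops.1 hl
  refine ⟨⟨w * l * w⁻¹, mem_loops.2 ⟨H.mul_mem (H.mul_mem hw hlH) (H.inv_mem hw), ?_⟩⟩, ?_⟩
  · simp only [mul_right, inv_right, mul_smul, inv_smul_smul, hlx]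
  · change label (w * l * w⁻¹) (w.right • x) = label l x
    simp only [label_mul, inv_right, inv_smul_smul, label_inv_smul, hlx, hwx, inv_one, one_mul,
      mul_one]

theorem loopRight_surjective (hright : H.map rightHom = ⊤) (x : X) :
    Function.Surjective (loopRight H x) := by
  rintro ⟨q, hq⟩
  obtain ⟨w, hw, rfl⟩ : q ∈ H.map rightHom := hright.ge (Subgroup.mem_top q)
  exact ⟨⟨w, mem_loops.2 ⟨hw, hq⟩⟩, rfl⟩

theorem valuesTrivialOn_empty_eq_top_of_commutator_le [Group.IsPerfect A]
    (hlabel : Function.Surjective (loopLabel H x))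
    (h : commutator (stabilizer G x) ≤ (loopLabel H x).ker.map (loopRight H x)) :
    valuesTrivialOn (base H) ∅ x = ⊤ := by
  refine valuesTrivialOn_empty_eq_top fun a => ?_
  obtain ⟨l, hl, rfl⟩ := (map_ker_eq_top hlabel h).ge (Subgroup.mem_top a)
  exact ⟨label l.1, label_mem_base (mem_loops.1 l.2).1 (congrArg Subtype.val hl), rfl⟩

/-! ### Labelled generators -/

open scoped Classical in
/-- The element of `A ≀ G` over `g` that applies `a` on the way into the point `x`, and nothing
elsewhere. -/
noncomputable def labelled (g : G) (x : X) (a : A) : PermWreath A G X :=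
  ⟨Pi.mulSingle x a, g⟩

theorem right_labelled (g : G) (x : X) (a : A) : (labelled g x a).right = g := rfl

open scoped Classical in
theorem label_labelled (g : G) (x : X) (a : A) (y : X) :
    label (labelled g x a) y = if g • y = x then a else 1 := by
  simp only [label, labelled, Pi.mulSingle_apply]

theorem label_labelled_of_eq {g : G} {x y : X} (a : A) (h : g • y = x) :
    label (labelled g x a) y = a := by
  rw [label_labelled, if_pos h]

theorem label_labelled_of_ne {g : G} {x y : X} (a : A) (h : g • y ≠ x) :
    label (labelled g x a) y = 1 := by
  rw [label_labelled, if_neg h]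

theorem right_pow (w : PermWreath A G X) (n : ℕ) : (w ^ n).right = w.right ^ n :=
  map_pow rightHom w n

theorem label_labelled_pow_eq_one {g : G} {x y : X} (a : A) (n : ℕ)
    (h : ∀ k, 0 < k → k ≤ n → g ^ k • y ≠ x) : label (labelled g x a ^ n) y = 1 := by
  induction n with
  | zero => rw [pow_zero, label_one]
  | succ n ih =>
    rw [pow_succ', label_mul, ih fun k hk hkn => h k hk (hkn.trans n.le_succ), mul_one, right_pow,
      right_labelled]
    refine label_labelled_of_ne a ?_
    rw [smul_smul, ← pow_succ']
    exact h _ n.succ_pos le_rfl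

theorem right_zpow (w : PermWreath A G X) (n : ℤ) : (w ^ n).right = w.right ^ n :=
  map_zpow rightHom w n

theorem label_labelled_pow_of_notMem_orbit {g : G} (a : A) (n : ℕ)
    (h : y ∉ orbit (Subgroup.zpowers g) x) : label (labelled g x a ^ n) y = 1 :=
  label_labelled_pow_eq_one a n fun k _ _ hk =>
    h (mem_orbit_symm.1 (mem_orbit_zpowers_iff.2 ⟨k, by rwa [zpow_natCast]⟩))

theorem label_labelled_zpow_of_notMem_orbit {g : G} (a : A) (n : ℤ)
    (h : y ∉ orbit (Subgroup.zpowers g) x) : label (labelled g x a ^ n) y = 1 := by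
  obtain ⟨n, rfl | rfl⟩ := n.eq_nat_or_neg
  · rw [zpow_natCast, label_labelled_pow_of_notMem_orbit a n h]
  · have hy : (labelled g x a ^ n).right • g ^ (-n : ℤ) • y = y := by
      rw [right_pow, right_labelled, zpow_neg, zpow_natCast, smul_inv_smul]
    conv_lhs => rw [← hy]
    rw [zpow_neg, zpow_natCast, label_inv_smul, label_labelled_pow_of_notMem_orbit a n
      (mt (zpow_smul_mem_orbit_zpowers_iff _).1 h), inv_one]

theorem label_labelled_pow_period [Finite X] (g : G) (x : X) (a : A) :
    label (labelled g x a ^ period g x) x = a := by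
  obtain ⟨n, hn⟩ := Nat.exists_eq_succ_of_ne_zero (period_pos_of_finite g x).ne'
  have hfirst : label (labelled g x a ^ n) x = 1 :=
    label_labelled_pow_eq_one a n fun k hk hkn => pow_smul_ne_of_lt_period hk (by omega)
  rw [hn, pow_succ', label_mul, hfirst, mul_one, right_pow, right_labelled]
  refine label_labelled_of_eq a ?_
  rw [smul_smul, ← pow_succ', ← Nat.succ_eq_add_one, ← hn, pow_period_smul]

/-- The elements of `A ≀ G` obtained by lifting `T` with trivial labels and each `g i` with the
label `a i` at the point `x i`. -/
noncomputable def wreathGens {ι : Type*} (T : Set G) (g : ι → G) (x : ι → X) (a : ι → A) :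
    Set (PermWreath A G X) :=
  inr '' T ∪ Set.range fun i => labelled (g i) (x i) (a i)

variable {ι : Type*} {T : Set G} {g : ι → G} {p : ι → X} {a : ι → A}

theorem inr_mem_of_wreathGens_subset (hH : wreathGens T g p a ⊆ H) {t : G} (ht : t ∈ T) :
    inr t ∈ H :=
  hH (Or.inl ⟨t, ht, rfl⟩)

theorem labelled_mem_of_wreathGens_subset (hH : wreathGens T g p a ⊆ H) (i : ι) :
    labelled (g i) (p i) (a i) ∈ H :=
  hH (Or.inr ⟨i, rfl⟩)

theorem flat_smul_of_labelled_mem [Finite X] {g : G} {a : A} (hw : labelled g x a ∈ H) (y : X) :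
    Flat H y (g • y) := by
  by_cases h : g • y = x
  · obtain ⟨n, hn⟩ := Nat.exists_eq_succ_of_ne_zero (period_pos_of_finite g x).ne'
    have hlast : g ^ n • x = y := by
      rw [← inv_smul_eq_iff.2 h.symm, eq_inv_smul_iff, smul_smul, ← pow_succ',
        ← Nat.succ_eq_add_one, ← hn, pow_period_smul]
    rw [h]
    exact Flat.symm ⟨labelled g x a ^ n, H.pow_mem hw n, by rw [right_pow, right_labelled, hlast],
      label_labelled_pow_eq_one a n fun k hk hkn => pow_smul_ne_of_lt_period hk (by omega)⟩
  · exact ⟨_, hw, rfl, label_labelled_of_ne a h⟩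

theorem flat_of_wreathGens_subset [Finite X] [IsPretransitive G X]
    (hT : Subgroup.closure (T ∪ Set.range g) = ⊤) (hH : wreathGens T g p a ⊆ H) (x y : X) :
    Flat H x y := by
  obtain ⟨q, rfl⟩ := exists_smul_eq G x y
  have hq : q ∈ Subgroup.closure (T ∪ Set.range g) := hT.ge (Subgroup.mem_top q)
  induction hq using Subgroup.closure_induction generalizing x with
  | mem s hs =>
    obtain hs | ⟨i, rfl⟩ := hs
    · exact ⟨inr s, inr_mem_of_wreathGens_subset hH hs, rfl, rfl⟩
    · exact flat_smul_of_labelled_mem (labelled_mem_of_wreathGens_subset hH i) x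
  | one => rw [one_smul]; exact Flat.refl x
  | mul s t _ _ hs ht => rw [mul_smul]; exact (ht x).trans (hs _)
  | inv s _ hs => simpa only [smul_inv_smul] using (hs (s⁻¹ • x)).symm

theorem loopLabel_surjective [Finite X] (hflat : ∀ x y, Flat H x y)
    (ha : Subgroup.closure (Set.range a) = ⊤) (hH : wreathGens T g p a ⊆ H) (x : X) :
    Function.Surjective (loopLabel H x) := by
  rw [← MonoidHom.range_eq_top, eq_top_iff, ← ha, Subgroup.closure_le]
  rintro _ ⟨i, rfl⟩
  refine (hflat (p i) x).range_loopLabel_le ⟨⟨labelled (g i) (p i) (a i) ^ period (g i) (p i),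
    mem_loops.2 ⟨H.pow_mem (labelled_mem_of_wreathGens_subset hH i) _, ?_⟩⟩,
    label_labelled_pow_period _ _ _⟩
  rw [right_pow, right_labelled, pow_period_smul]

/-- The powers of `g` bring `y` back no later than `x`, and never through `x`. -/
def ReturnsApart (g : G) (x y : X) : Prop :=
  y ∉ orbit (Subgroup.zpowers g) x ∧ g ^ period g x • y = y

theorem ReturnsApart.exists_loop [Finite X] {g : G} {a : A} {w : PermWreath A G X}
    (h : ReturnsApart g (w.right • x) (w.right • y)) (hg : labelled g (w.right • x) a ∈ H)
    (hw : w ∈ H) :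
    ∃ v ∈ H, v.right • x = x ∧ v.right • y = y ∧ label v y = 1 ∧
      label v x = (label w x)⁻¹ * a * label w x := by
  set l := labelled g (w.right • x) a ^ period g (w.right • x)
  have hlr : l.right = g ^ period g (w.right • x) := by rw [right_pow, right_labelled]
  have hlx : l.right • w.right • x = w.right • x := by rw [hlr, pow_period_smul]
  have hly : l.right • w.right • y = w.right • y := by rw [hlr, h.2]
  refine ⟨w⁻¹ * l * w, H.mul_mem (H.mul_mem (H.inv_mem hw) (H.pow_mem hg _)) hw, ?_, ?_, ?_, ?_⟩
  · rw [mul_right, mul_right, inv_right, mul_smul, mul_smul, hlx, inv_smul_smul]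
  · rw [mul_right, mul_right, inv_right, mul_smul, mul_smul, hly, inv_smul_smul]
  · rw [label_mul, label_mul, hly, label_inv_smul,
      label_labelled_pow_of_notMem_orbit _ _ h.1, mul_one, inv_mul_cancel]
  · rw [label_mul, label_mul, hlx, label_inv_smul, label_labelled_pow_period]

theorem commutator_mem_valuesTrivialOn {v : PermWreath A G X} (hv : v ∈ H)
    (hvx : v.right • x = x) (hvy : v.right • y = y) (hlabel : label v y = 1)
    (hx : valuesTrivialOn (base H) ∅ x = ⊤) (b : A) :
    ⁅label v x, b⁆ ∈ valuesTrivialOn (base H) {y} x := by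
  obtain ⟨f, hf, rfl⟩ := exists_mem_apply_eq hx b
  obtain ⟨f', hf', h⟩ := exists_mem_base_conj hv hf
  have hfx := h x
  have hfy := h y
  rw [hvx] at hfx
  rw [hvy, hlabel, one_mul, inv_one, mul_one] at hfy
  refine mem_valuesTrivialOn_singleton.2
    ⟨f' * f⁻¹, (base H).mul_mem hf' ((base H).inv_mem hf), ?_, ?_⟩
  · rw [Pi.mul_apply, Pi.inv_apply, hfy, mul_inv_cancel]
  · rw [Pi.mul_apply, Pi.inv_apply, hfx, commutatorElement_def]

theorem map_rightHom_eq_top (hT : Subgroup.closure (T ∪ Set.range g) = ⊤)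
    (hH : wreathGens T g p a ⊆ H) : H.map rightHom = ⊤ := by
  rw [eq_top_iff, ← hT, Subgroup.closure_le]
  rintro _ (ht | ⟨i, rfl⟩)
  · exact ⟨_, inr_mem_of_wreathGens_subset hH ht, rfl⟩
  · exact ⟨_, labelled_mem_of_wreathGens_subset hH i, rfl⟩

theorem valuesTrivialOn_singleton_eq_top_of_returnsApart [Finite X] [Group.IsPerfect A]
    (hH : wreathGens T g p a ⊆ H) (ha : Subgroup.normalClosure (Set.range a) = ⊤)
    (hright : H.map rightHom = ⊤) (hx : valuesTrivialOn (base H) ∅ x = ⊤)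
    (h : ∀ i, ∃ q : G, q • x = p i ∧ ReturnsApart (g i) (p i) (q • y)) :
    valuesTrivialOn (base H) {y} x = ⊤ := by
  have := normal_valuesTrivialOn (F := {y}) hx
  refine eq_top_of_commutators_generators_mem ha ?_
  rintro _ ⟨i, rfl⟩ b
  obtain ⟨q, hqx, hq⟩ := h i
  obtain ⟨w, hw, rfl⟩ : q ∈ H.map rightHom := hright.ge (Subgroup.mem_top q)
  have hg := labelled_mem_of_wreathGens_subset hH i
  rw [← hqx] at hg hq
  obtain ⟨v, hv, hvx, hvy, hlabel, hvlabel⟩ := hq.exists_loop hg hw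
  have hmem := this.conj_mem _ (commutator_mem_valuesTrivialOn hv hvx hvy hlabel hx
    ((label w x)⁻¹ * b * label w x)) (label w x)
  rw [hvlabel] at hmem
  simpa only [commutatorElement_def, mul_inv_rev, inv_inv, mul_assoc, mul_inv_cancel_left,
    mul_inv_cancel, mul_one] using hmem

/-! ### Normal generation by a lift of the acting group -/

theorem eq_top_of_base_eq_top (hbase : base H = ⊤) (hright : H.map rightHom = ⊤) :
    H = ⊤ := by
  refine (Subgroup.eq_top_iff' H).2 fun w => ?_
  obtain ⟨h, hh, hhw⟩ : w.right ∈ H.map rightHom := hright.ge (Subgroup.mem_top _)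
  have hquot : inl (label (w * h⁻¹)) = w * h⁻¹ :=
    inl_label_of_right_eq_one (by rw [mul_right, inv_right, ← hhw]; exact mul_inv_cancel _)
  have hmem : label (w * h⁻¹) ∈ base H := hbase.ge (Subgroup.mem_top _)
  rw [base, Subgroup.mem_comap, hquot] at hmem
  exact (H.mul_mem_cancel_right (H.inv_mem hh)).1 hmem

theorem eq_top_of_inr_mem_of_inl_mulSingle_mem [Finite X] [DecidableEq X]
    {N : Subgroup (PermWreath A G X)} (hinr : ∀ q : G, inr q ∈ N)
    (hinl : ∀ (x : X) (a : A), inl (Pi.mulSingle x a) ∈ N) : N = ⊤ := by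
  have := Fintype.ofFinite X
  refine (Subgroup.eq_top_iff' N).2 fun w => ?_
  rw [← inl_left_mul_inr_right w]
  refine N.mul_mem ?_ (hinr _)
  exact Subgroup.pi_mem_of_mulSingle_mem (H := base N) w.left fun x => hinl x _

theorem conj_inr_inl_mulSingle [DecidableEq X] (q : G) (x : X) (a : A) :
    (inr q * inl (Pi.mulSingle x a) * (inr q)⁻¹ : PermWreath A G X) =
      inl (Pi.mulSingle (q • x) a) := by
  rw [← map_inv, ← inl_aut]
  congr 1
  funext y
  simp only [mulAutArrow_apply_eq, Pi.mulSingle_apply, inv_smul_eq_iff]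

theorem inr_mem_of_normalClosure_eq_top (hT : Subgroup.normalClosure T = ⊤)
    {N : Subgroup (PermWreath A G X)} [N.Normal]
    (h : inr '' T ⊆ (N : Set (PermWreath A G X))) (q : G) : inr q ∈ N := by
  have hle : Subgroup.normalClosure T ≤ N.comap inr :=
    Subgroup.normalClosure_le_normal fun t ht => h ⟨t, ht, rfl⟩
  exact hle (hT.ge (Subgroup.mem_top q))

-- Modulo `N`, a value in the base group may be moved to any other point, so the values at two
-- points commute even if the points coincide.
theorem commutator_le_of_inr_mem [Finite X] [Nontrivial X] [IsPretransitive G X]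
    {N : Subgroup (PermWreath A G X)} [N.Normal] (h : ∀ q : G, inr q ∈ N) :
    commutator (PermWreath A G X) ≤ N := by
  classical
  have := Fintype.ofFinite X
  set f := QuotientGroup.mk' N
  have hf_inr (q : G) : f (inr q) = 1 := (QuotientGroup.eq_one_iff _).2 (h q)
  have hf_move (q : G) (x : X) (a : A) :
      f (inl (Pi.mulSingle (q • x) a)) = f (inl (Pi.mulSingle x a)) := by
    rw [← conj_inr_inl_mulSingle, map_mul, map_mul, map_inv, hf_inr, one_mul, inv_one, mul_one]
  have hcomm_single (x x' : X) (a a' : A) :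
      Commute (f (inl (Pi.mulSingle x a))) (f (inl (Pi.mulSingle x' a'))) := by
    obtain ⟨y, hy⟩ := exists_ne x'
    obtain ⟨q, rfl⟩ := exists_smul_eq G x y
    rw [← hf_move q]
    exact ((Pi.mulSingle_commute hy a a').map inl).map f
  have hcomm_inl (k k' : X → A) : Commute (f (inl k)) (f (inl k')) := by
    refine commute_map_of_commute_mulSingle (f.comp inl) (fun x a => ?_) k
    exact (commute_map_of_commute_mulSingle (f.comp inl) (fun x' a' => hcomm_single x' x a' a)
      k').symm
  have hf (w : PermWreath A G X) : f w = f (inl w.left) := by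
    conv_lhs => rw [← inl_left_mul_inr_right w, map_mul, hf_inr, mul_one]
  rw [commutator_def, Subgroup.commutator_le]
  intro v _ w _
  rw [← QuotientGroup.eq_one_iff, ← QuotientGroup.mk'_apply, map_commutatorElement,
    commutatorElement_eq_one_iff_commute]
  change Commute (f v) (f w)
  rw [hf v, hf w]
  exact hcomm_inl _ _

theorem commutator_le_normalClosure [Finite X] [Nontrivial X] [IsPretransitive G X]
    (hT : Subgroup.normalClosure T = ⊤) :
    commutator (PermWreath A G X) ≤ Subgroup.normalClosure (inr '' T) :=
  commutator_le_of_inr_mem (inr_mem_of_normalClosure_eq_top hT Subgroup.subset_normalClosure)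

theorem commutator_le_of_surjective [Finite X] [Nontrivial X] [IsPretransitive G X] {M : Type*}
    [Group M] {f : PermWreath A G X →* M} (hf : Function.Surjective f)
    (hT : Subgroup.normalClosure T = ⊤) {K : Subgroup M} [K.Normal]
    (h : ∀ t ∈ T, f (inr t) ∈ K) : commutator M ≤ K := by
  rw [commutator_def, ← Subgroup.map_top_of_surjective f hf, ← Subgroup.map_commutator,
    Subgroup.map_le_iff_le_comap]
  refine (commutator_le_normalClosure hT).trans (Subgroup.normalClosure_le_normal ?_)
  rintro _ ⟨t, ht, rfl⟩
  exact h t ht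

theorem normalClosure_inr_image_eq_top [Finite X] [Nontrivial X] [IsPretransitive G X]
    [Group.IsPerfect A] (hT : Subgroup.normalClosure T = ⊤) :
    Subgroup.normalClosure (inr '' T : Set (PermWreath A G X)) = ⊤ := by
  classical
  refine eq_top_of_inr_mem_of_inl_mulSingle_mem
    (inr_mem_of_normalClosure_eq_top hT Subgroup.subset_normalClosure) fun x a => ?_
  refine commutator_le_normalClosure hT ?_
  have ha : inl (Pi.mulSingle x a) ∈
      (commutator A).map (inl.comp (MonoidHom.mulSingle (fun _ : X => A) x) :
        A →* PermWreath A G X) :=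
    ⟨a, Group.IsPerfect.mem_commutator, rfl⟩
  rw [commutator_def, Subgroup.map_commutator] at ha
  exact Subgroup.commutator_mono le_top le_top ha

end PermWreath

open SemidirectProduct MulAction PermWreath

/-! ### The product action -/

section ProductAction

variable {α β : Type} {A : Subgroup (Perm α)} {B : Subgroup (Perm β)}

/-- The wreath product `A ≀ B` in its product action on `β → α`. -/
def toExpWr (A : Subgroup (Perm α)) (B : Subgroup (Perm β)) : PermWreath A B β →* expWr A B where
  toFun w := ⟨prodPerm (fun i => w.left i) w.right, fun i => w.left i, w.right,
    fun i => (w.left i).2, w.right.2, rfl⟩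
  map_one' := Subtype.ext prodPerm_one
  map_mul' v w := Subtype.ext <|
    (prodPerm_mul (fun i => (v.left i : Perm α)) (fun i => (w.left i : Perm α))
      (v.right : Perm β) (w.right : Perm β)).symm

theorem toExpWr_surjective : Function.Surjective (toExpWr A B) := by
  rintro ⟨_, a, b, ha, hb, rfl⟩
  exact ⟨⟨fun i => ⟨a i, ha i⟩, ⟨b, hb⟩⟩, rfl⟩

theorem toExpWr_smul_apply (w : PermWreath A B β) (x : β → α) (i : β) :
    (toExpWr A B w • x) (w.right • i) = label w i • x i := by
  change w.left (w.right • i) • x (w.right⁻¹ • w.right • i) = label w i • x i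
  rw [inv_smul_smul, label]

theorem toExpWr_zpow_smul_apply (w : PermWreath A B β) (n : ℤ) (x : β → α) (i : β) :
    (toExpWr A B w ^ n • x) (w.right ^ n • i) = label (w ^ n) i • x i := by
  rw [← map_zpow, ← right_zpow, toExpWr_smul_apply]

theorem toExpWr_smul_eq_iff {w : PermWreath A B β} {x y : β → α} :
    toExpWr A B w • x = y ↔ ∀ i, label w i • x i = y (w.right • i) := by
  simp only [← toExpWr_smul_apply, funext_iff]
  exact ⟨fun h i => h _, fun h i => by simpa using h (w.right⁻¹ • i)⟩

theorem exists_toExpWr_smul_eq [IsPretransitive A α] (x y : β → α) (q : B) :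
    ∃ w : PermWreath A B β, w.right = q ∧ toExpWr A B w • x = y := by
  choose b hb using fun i => exists_smul_eq A (x (q⁻¹ • i)) (y i)
  refine ⟨⟨b, q⟩, rfl, ?_⟩
  funext i
  exact hb i

instance [IsPretransitive A α] : IsPretransitive (expWr A B) (β → α) where
  exists_smul_eq x y := by
    obtain ⟨w, -, hw⟩ := exists_toExpWr_smul_eq (A := A) x y (1 : B)
    exact ⟨_, hw⟩

theorem toExpWr_inr_smul_const (q : B) (u : α) :
    toExpWr A B (inr q) • Function.const β u = Function.const β u := rfl

/-- Restricting the labels to the stabilizer of `u` maps the wreath product to the stabilizer of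
the constant point `u` in the product action. -/
def toStabilizerConst (A : Subgroup (Perm α)) (B : Subgroup (Perm β)) (u : α) :
    PermWreath (stabilizer A u) B β →* stabilizer (expWr A B) (Function.const β u) :=
  ((toExpWr A B).comp (SemidirectProduct.map ((stabilizer A u).subtype.compLeft β)
    (MonoidHom.id B) fun _ => rfl)).codRestrict _ fun w =>
      toExpWr_smul_eq_iff.2 fun i => (w.left (w.right • i)).2

theorem toStabilizerConst_surjective (u : α) :
    Function.Surjective (toStabilizerConst A B u) := by
  rintro ⟨σ, hσ⟩
  obtain ⟨w, rfl⟩ := toExpWr_surjective σ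
  have hw (i : β) : w.left i ∈ stabilizer A u := by
    have hi := toExpWr_smul_eq_iff.1 hσ (w.right⁻¹ • i)
    rwa [label, smul_inv_smul] at hi
  exact ⟨⟨fun i => ⟨w.left i, hw i⟩, w.right⟩, rfl⟩

theorem valuesTrivialOn_base_const_eq_top {C : Type*} [Group C] [Group.IsPerfect C] [Finite β]
    [Nontrivial β] [IsPretransitive B β] {T : Set B} (hT : Subgroup.normalClosure T = ⊤)
    {H : Subgroup (PermWreath C (expWr A B) (β → α))}
    (hTH : ∀ t ∈ T, inr (toExpWr A B (inr t)) ∈ H) (hright : H.map rightHom = ⊤) (u : α)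
    (hlabel : Function.Surjective (loopLabel H (Function.const β u))) :
    valuesTrivialOn (base H) ∅ (Function.const β u) = ⊤ := by
  refine valuesTrivialOn_empty_eq_top_of_commutator_le hlabel ?_
  have := (loopLabel H (Function.const β u)).normal_ker.map _
    (loopRight_surjective hright (Function.const β u))
  refine commutator_le_of_surjective (toStabilizerConst_surjective u) hT fun t ht => ?_
  exact ⟨⟨inr (toExpWr A B (inr t)), mem_loops.2 ⟨hTH t ht, toExpWr_inr_smul_const t u⟩⟩,
    label_inr _ _, rfl⟩

end ProductAction

/-! ### Separating coordinates by marked points -/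

section Separation

variable {α β : Type} {A : Subgroup (Perm α)} {B : Subgroup (Perm β)}

theorem labelled_zpow_smul_apply_of_notMem_orbit {q : B} {z i : β} (b : A)
    (hi : i ∉ orbit (Subgroup.zpowers q) z) (k : ℤ) (x : β → α) :
    (toExpWr A B (labelled q z b) ^ k • x) (q ^ k • i) = x i := by
  have h := toExpWr_zpow_smul_apply (labelled q z b) k x i
  rwa [label_labelled_zpow_of_notMem_orbit b k hi, one_smul, right_labelled] at h

theorem labelled_zpow_smul_apply_eq_zpow_neg {q : B} {z i : β} (b : A)
    (hi : i ∉ orbit (Subgroup.zpowers q) z) (k : ℤ) (x : β → α) :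
    (toExpWr A B (labelled q z b) ^ k • x) i = x (q ^ (-k) • i) := by
  have h := labelled_zpow_smul_apply_of_notMem_orbit b
    (mt (zpow_smul_mem_orbit_zpowers_iff (-k)).1 hi) k x
  rwa [zpow_neg, smul_inv_smul, ← zpow_neg] at h

/-- A point of `β → α` that is constantly `v` on the `q`-orbit of `z`, and on every other `q`-orbit
takes the value `u` exactly once and `u'` elsewhere. The marks `u` make the period of such a point
under a labelled generator over `q` a multiple of the order of `q`. -/
structure IsMarked (q : B) (z : β) (v u u' : α) (x : β → α) : Prop where
  on_orbit : ∀ i ∈ orbit (Subgroup.zpowers q) z, x i = v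
  off_orbit : ∀ i ∉ orbit (Subgroup.zpowers q) z, ∃ r ∈ orbit (Subgroup.zpowers q) i,
    x r = u ∧ ∀ j ∈ orbit (Subgroup.zpowers q) r, j ≠ r → x j = u'

theorem exists_isMarked (q : B) (z : β) (v u u' : α) : ∃ x, IsMarked q z v u u' x := by
  classical
  let rep (i : β) : β := (Quotient.mk (orbitRel (Subgroup.zpowers q) β) i).out
  have rep_mem (i : β) : rep i ∈ orbit (Subgroup.zpowers q) i :=
    Quotient.mk_out (s := orbitRel (Subgroup.zpowers q) β) i
  have rep_eq {i j : β} (h : j ∈ orbit (Subgroup.zpowers q) i) : rep j = rep i :=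
    congrArg Quotient.out (Quotient.sound (s := orbitRel (Subgroup.zpowers q) β) h)
  refine ⟨fun i => if i ∈ orbit (Subgroup.zpowers q) z then v else if i = rep i then u else u',
    fun i hi => if_pos hi, fun i hi => ⟨rep i, rep_mem i, ?_, fun j hj hne => ?_⟩⟩
  · rw [if_neg (notMem_orbit_of_mem_orbit hi (rep_mem i)), if_pos (rep_eq (rep_mem i)).symm]
  · rw [orbit_eq_iff.2 (rep_mem i)] at hj
    rw [if_neg (notMem_orbit_of_mem_orbit hi hj), if_neg (rep_eq hj ▸ hne)]

/-- `x` and `y` differ at `s`, and either nowhere else or `A` separates no value of `x` from the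
corresponding value of `y`. -/
def SeparableAt (A : Subgroup (Perm α)) (x y : β → α) (s : β) : Prop :=
  x s ≠ y s ∧
    ((∀ i ≠ s, y i = x i) ∨ ∀ i, stabilizer A (x i) ≤ stabilizer A (y i))

theorem SeparableAt.toExpWr_smul {x y : β → α} {s : β} (h : SeparableAt A x y s)
    (w : PermWreath A B β) :
    SeparableAt A (toExpWr A B w • x) (toExpWr A B w • y) (w.right • s) := by
  refine ⟨?_, h.2.imp (fun hxy i hi => ?_) fun hstab i => ?_⟩
  · rw [toExpWr_smul_apply, toExpWr_smul_apply]
    exact (MulAction.injective _).ne h.1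
  all_goals obtain ⟨i, rfl⟩ := MulAction.surjective w.right i
  · rw [toExpWr_smul_apply, toExpWr_smul_apply, hxy i (ne_of_apply_ne _ hi)]
  · rw [toExpWr_smul_apply, toExpWr_smul_apply, stabilizer_smul_eq_stabilizer_map_conj,
      stabilizer_smul_eq_stabilizer_map_conj]
    exact Subgroup.map_mono (hstab i)

variable {q : B} {z s : β} {v u u' : α} {x y : β → α} {b : A} {k : ℤ}

namespace IsMarked

theorem zpow_smul_eq_of_apply_eq {r : β} (hr : r ∉ orbit (Subgroup.zpowers q) z) (hu : u ≠ u')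
    (hru' : ∀ j ∈ orbit (Subgroup.zpowers q) r, j ≠ r → x j = u')
    (h : (toExpWr A B (labelled q z b) ^ k • x) r = u) : q ^ k • r = r := by
  rw [labelled_zpow_smul_apply_eq_zpow_neg b hr] at h
  by_contra hne
  refine hu (h.symm.trans (hru' _ ((zpow_smul_mem_orbit_zpowers_iff _).2 (mem_orbit_self r)) ?_))
  rwa [zpow_neg, Ne, inv_smul_eq_iff, eq_comm]

theorem zpow_smul_eq_of_notMem_orbit (hx : IsMarked q z v u u' x) (hu : u ≠ u')
    (hk : toExpWr A B (labelled q z b) ^ k • x = x) {i : β}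
    (hi : i ∉ orbit (Subgroup.zpowers q) z) : q ^ k • i = i := by
  obtain ⟨r, hr, hru, hru'⟩ := hx.off_orbit i hi
  have hr_notMem := notMem_orbit_of_mem_orbit hi hr
  exact zpow_smul_eq_of_mem_orbit
    (zpow_smul_eq_of_apply_eq hr_notMem hu hru' (by rw [hk, hru])) hr

-- If `q ^ k` moved `z`, the label of the `k`-th power at `z` would send both `v`, the value of `x`
-- there, and `b • v`, the value of the translate of `x` there, to `v`.
theorem zpow_smul_basepoint_eq (hx : IsMarked q z v u u' x) (hb : b • v ≠ v)
    (hk : toExpWr A B (labelled q z b) ^ k • x = x) : q ^ k • z = z := by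
  set g := toExpWr A B (labelled q z b) with hg
  by_contra hne
  have hon (n : ℤ) : x (q ^ n • z) = v :=
    hx.on_orbit _ ((zpow_smul_mem_orbit_zpowers_iff n).2 (mem_orbit_self z))
  have hgx (n : ℤ) : (g • x) (q ^ n • z) = label (labelled q z b) (q⁻¹ • q ^ n • z) • v := by
    have h := toExpWr_smul_apply (labelled q z b) x (q⁻¹ • q ^ n • z)
    rwa [right_labelled, smul_inv_smul, smul_smul, ← zpow_neg_one, ← zpow_add, hon, zpow_add,
      mul_smul, zpow_neg_one] at h
  have hz : (g • x) z = b • v := by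
    simpa [label_labelled_of_eq] using hgx 0
  have hkz : (g • x) (q ^ k • z) = v := by
    rw [hgx, label_labelled_of_ne _ (by rwa [smul_inv_smul]), one_smul]
  have hgkx : g ^ k • g • x = g • x := by rw [smul_smul, (Commute.refl g).zpow_left k, mul_smul, hk]
  have h := toExpWr_zpow_smul_apply (labelled q z b) k x z
  have h' := toExpWr_zpow_smul_apply (labelled q z b) k (g • x) z
  rw [← hg, hk, right_labelled, hon k, hx.on_orbit z (mem_orbit_self z)] at h
  rw [← hg, hgkx, right_labelled, hkz, hz] at h'
  exact hb (MulAction.injective _ (h'.symm.trans h))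

theorem zpow_smul_eq (hx : IsMarked q z v u u' x) (hu : u ≠ u') (hb : b • v ≠ v)
    (hk : toExpWr A B (labelled q z b) ^ k • x = x) (i : β) : q ^ k • i = i := by
  by_cases hi : i ∈ orbit (Subgroup.zpowers q) z
  · exact zpow_smul_eq_of_mem_orbit (hx.zpow_smul_basepoint_eq hb hk) (mem_orbit_symm.1 hi)
  · exact hx.zpow_smul_eq_of_notMem_orbit hu hk hi

theorem zpow_smul_eq_of_stabilizer_le (hx : IsMarked q z v u u' x) (hu : u ≠ u') (hb : b • v ≠ v)
    (hy : ∀ i ∈ orbit (Subgroup.zpowers q) z, stabilizer A (x i) ≤ stabilizer A (y i))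
    (hk : toExpWr A B (labelled q z b) ^ k • x = x) :
    toExpWr A B (labelled q z b) ^ k • y = y := by
  have hqk := hx.zpow_smul_eq hu hb hk
  funext i
  by_cases hi : i ∈ orbit (Subgroup.zpowers q) z
  · have hstab : label (labelled q z b ^ k) i ∈ stabilizer A (x i) := by
      have h := toExpWr_zpow_smul_apply (labelled q z b) k x i
      rw [hk, right_labelled, hqk] at h
      exact h.symm
    have h := toExpWr_zpow_smul_apply (labelled q z b) k y i
    rw [right_labelled, hqk] at h
    exact h.trans (hy i hi hstab)
  · have h := labelled_zpow_smul_apply_of_notMem_orbit b hi k y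
    rwa [hqk] at h

theorem zpow_smul_apply_mark_eq {r : β} (hr : r ∉ orbit (Subgroup.zpowers q) z) (hru : x r = u)
    (hru' : ∀ j ∈ orbit (Subgroup.zpowers q) r, j ≠ r → x j = u')
    (hu : ¬stabilizer A u ≤ stabilizer A u')
    (h : SeparableAt A x (toExpWr A B (labelled q z b) ^ k • x) s) :
    (toExpWr A B (labelled q z b) ^ k • x) r = u := by
  set y := toExpWr A B (labelled q z b) ^ k • x
  have horbit (n : ℤ) : q ^ n • r ∈ orbit (Subgroup.zpowers q) r :=
    (zpow_smul_mem_orbit_zpowers_iff n).2 (mem_orbit_self r)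
  by_contra hyr
  obtain ⟨-, heq | hstab⟩ := h
  · have hyk : y (q ^ k • r) = u :=
      (labelled_zpow_smul_apply_of_notMem_orbit b hr k x).trans hru
    have hkr : q ^ k • r ≠ r := fun h => hyr (h ▸ hyk)
    have hrs : r = s := by
      by_contra hne
      exact hyr ((heq r hne).trans hru)
    rw [heq _ (hrs ▸ hkr), hru' _ (horbit k) hkr] at hyk
    exact hu (by rw [hyk])
  · have hpre : y r = x (q ^ (-k) • r) := labelled_zpow_smul_apply_eq_zpow_neg b hr k x
    have hne : q ^ (-k) • r ≠ r := fun h => hyr (by rw [hpre, h, hru])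
    have hyr' : y r = u' := hpre.trans (hru' _ (horbit _) hne)
    exact hu (hru ▸ hyr' ▸ hstab r)

theorem notMem_orbit_of_separableAt (hx : IsMarked q z v u u' x)
    (hu : ¬stabilizer A u ≤ stabilizer A u') (hs : s ∉ orbit (Subgroup.zpowers q) z)
    (h : SeparableAt A x y s) :
    y ∉ orbit (Subgroup.zpowers (toExpWr A B (labelled q z b))) x := by
  rw [mem_orbit_zpowers_iff]
  rintro ⟨k, rfl⟩
  obtain ⟨r, hr, hru, hru'⟩ := hx.off_orbit s hs
  have hrO := notMem_orbit_of_mem_orbit hs hr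
  have hkr := zpow_smul_eq_of_apply_eq hrO (by rintro rfl; exact hu le_rfl) hru'
    (zpow_smul_apply_mark_eq hrO hru hru' hu h)
  have hks := labelled_zpow_smul_apply_of_notMem_orbit b hs k x
  rw [zpow_smul_eq_of_mem_orbit hkr hr] at hks
  exact h.1 hks.symm

theorem returnsApart (hx : IsMarked q z v u u' x) (hb : b • v ≠ v)
    (hu : ¬stabilizer A u ≤ stabilizer A u') (hs : s ∉ orbit (Subgroup.zpowers q) z)
    (h : SeparableAt A x y s) : ReturnsApart (toExpWr A B (labelled q z b)) x y := by
  refine ⟨hx.notMem_orbit_of_separableAt hu hs h, ?_⟩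
  set g := toExpWr A B (labelled q z b)
  have hstab : ∀ i ∈ orbit (Subgroup.zpowers q) z, stabilizer A (x i) ≤ stabilizer A (y i) := by
    intro i hi
    obtain ⟨-, heq | hle⟩ := h
    · rw [heq i (fun his => hs (his ▸ hi))]
    · exact hle i
  have hk : g ^ (period g x : ℤ) • x = x := by rw [zpow_natCast, pow_period_smul]
  simpa only [zpow_natCast] using
    hx.zpow_smul_eq_of_stabilizer_le (by rintro rfl; exact hu le_rfl) hb hstab hk

end IsMarked

variable {C : Type*} [Group C] {ι : Type*} {T : Set (expWr A B)} {q : ι → B} {z : ι → β}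
  {b : ι → A} {v : ι → α} {p : ι → β → α} {c : ι → C}
  {H : Subgroup (PermWreath C (expWr A B) (β → α))}

theorem valuesTrivialOn_singleton_eq_top_of_separableAt [Finite α] [Finite β]
    [IsPretransitive A α] [IsPretransitive B β] [Group.IsPerfect C]
    (hH : wreathGens T (fun i => toExpWr A B (labelled (q i) (z i) (b i))) p c ⊆ H)
    (hc : Subgroup.normalClosure (Set.range c) = ⊤) (hright : H.map rightHom = ⊤)
    (hx : valuesTrivialOn (base H) ∅ x = ⊤)
    (hz : ∀ i, ∃ s, s ∉ orbit (Subgroup.zpowers (q i)) (z i)) (hb : ∀ i, b i • v i ≠ v i)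
    (hu : ¬stabilizer A u ≤ stabilizer A u') (hp : ∀ i, IsMarked (q i) (z i) (v i) u u' (p i))
    (h : SeparableAt A x y s) : valuesTrivialOn (base H) {y} x = ⊤ := by
  refine valuesTrivialOn_singleton_eq_top_of_returnsApart hH hc hright hx fun i => ?_
  obtain ⟨s', hs'⟩ := hz i
  obtain ⟨t, rfl⟩ := exists_smul_eq B s s'
  obtain ⟨w, rfl, hw⟩ := exists_toExpWr_smul_eq (A := A) x (p i) t
  refine ⟨toExpWr A B w, hw, (hp i).returnsApart (hb i) hu hs' ?_⟩
  rw [← hw]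
  exact h.toExpWr_smul w

theorem exists_smul_eq_self_and_separableAt {i : β} {a : A} (hax : a ∈ stabilizer A (x i))
    (hay : a ∉ stabilizer A (y i)) :
    ∃ π : expWr A B, π • x = x ∧ SeparableAt A y (π • y) i := by
  classical
  refine ⟨toExpWr A B (inl (Pi.mulSingle i a)), ?_⟩
  have happly (f : β → α) (j : β) :
      (toExpWr A B (inl (Pi.mulSingle i a)) • f) j = (Pi.mulSingle i a : β → A) j • f j := by
    simpa only [right_inl, one_smul, label_inl] using
      toExpWr_smul_apply (B := B) (inl (Pi.mulSingle i a)) f j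
  refine ⟨?_, ?_, Or.inl fun j hj => ?_⟩
  · funext j
    rw [happly]
    obtain rfl | hj := eq_or_ne j i
    · rwa [Pi.mulSingle_eq_same]
    · rw [Pi.mulSingle_eq_of_ne hj, one_smul]
  · rw [happly, Pi.mulSingle_eq_same]
    exact Ne.symm hay
  · rw [happly, Pi.mulSingle_eq_of_ne hj, one_smul]

theorem valuesTrivialOn_singleton_eq_top_of_ne (hright : H.map rightHom = ⊤)
    (hfull : ∀ x, valuesTrivialOn (base H) ∅ x = ⊤)
    (hsep : ∀ x y s, SeparableAt A x y s → valuesTrivialOn (base H) {y} x = ⊤) (hxy : x ≠ y) :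
    valuesTrivialOn (base H) {y} x = ⊤ := by
  by_cases hstab : ∀ i, stabilizer A (x i) ≤ stabilizer A (y i)
  · obtain ⟨s, hs⟩ := Function.ne_iff.1 hxy
    exact hsep x y s ⟨hs, Or.inr hstab⟩
  obtain ⟨i, hi⟩ := not_forall.1 hstab
  obtain ⟨a, hax, hay⟩ := SetLike.not_le_iff_exists.1 hi
  obtain ⟨π, hπx, hπy⟩ := exists_smul_eq_self_and_separableAt (B := B) hax hay
  obtain ⟨w, hw, hwπ⟩ : π⁻¹ ∈ H.map rightHom := hright.ge (Subgroup.mem_top _)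
  rw [rightHom_eq_right] at hwπ
  have hle := valuesTrivialOn_base_le (y := π • y) hw
    (by rw [hwπ, inv_smul_eq_iff, hπx]) (hfull x)
  rw [hwπ, inv_smul_smul] at hle
  exact valuesTrivialOn_singleton_eq_top_symm
    (valuesTrivialOn_singleton_eq_top_of_le hle (hsep y _ i hπy)) (hfull x)

end Separation

/-! ### Iterated exponentiations -/

/-- `A ≀ G` is generated by lifts of `T` with trivial labels together with lifts of suitable
elements `g i`, each carrying the label `a i` at a single point and intransitive on `X`. -/
def HasLabelledGenerators {A G : Type*} (X : Type*) [Group A] [Group G] [MulAction G X] {ι : Type*}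
    (T : Set G) (a : ι → A) : Prop :=
  ∃ (g : ι → G) (x : ι → X), (∀ i, ∃ y, y ∉ orbit (Subgroup.zpowers (g i)) (x i)) ∧
    Subgroup.closure (wreathGens T g x a) = ⊤

theorem hasLabelledGenerators_of_closure_eq_top {A G X : Type*} [Group A] [Group G] [MulAction G X]
    [Finite X] [Nontrivial X] [IsPretransitive G X] {ι : Type*} {T : Set G} {a : ι → A}
    (hT : Subgroup.closure T = ⊤) (ha : Subgroup.closure (Set.range a) = ⊤) :
    HasLabelledGenerators X T a := by
  classical
  obtain ⟨x₀, y, hxy⟩ := exists_pair_ne X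
  refine ⟨1, fun _ => x₀, fun _ => ⟨y, fun h => hxy ?_⟩, ?_⟩
  · obtain ⟨k, hk⟩ := mem_orbit_zpowers_iff.1 h
    simpa using hk
  set N := Subgroup.closure (wreathGens T 1 (fun _ => x₀) a)
  have hN : wreathGens T 1 (fun _ => x₀) a ⊆ N := Subgroup.subset_closure
  have hinr (q : G) : inr q ∈ N := by
    have hle : Subgroup.closure T ≤ N.comap inr :=
      (Subgroup.closure_le _).2 fun t => inr_mem_of_wreathGens_subset hN
    exact hle (hT.ge (Subgroup.mem_top q))
  refine eq_top_of_inr_mem_of_inl_mulSingle_mem hinr fun x b => ?_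
  obtain ⟨q, rfl⟩ := exists_smul_eq G x₀ x
  rw [← conj_inr_inl_mulSingle]
  refine N.mul_mem (N.mul_mem (hinr q) ?_) (N.inv_mem (hinr q))
  have hle : Subgroup.closure (Set.range a) ≤
      N.comap (inl.comp (MonoidHom.mulSingle (fun _ : X => A) x₀)) := by
    rw [Subgroup.closure_le]
    rintro _ ⟨i, rfl⟩
    exact labelled_mem_of_wreathGens_subset hN i
  exact hle (ha.ge (Subgroup.mem_top b))

section Step

variable {α β : Type} {A : Subgroup (Perm α)} {B : Subgroup (Perm β)} {ι : Type*} {T : Set B}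
  {q : ι → B} {z : ι → β} {b : ι → A}

theorem closure_image_toExpWr_eq_top (h : Subgroup.closure (wreathGens T q z b) = ⊤) :
    Subgroup.closure ((fun t => toExpWr A B (inr t)) '' T ∪
      Set.range fun i => toExpWr A B (labelled (q i) (z i) (b i))) = ⊤ := by
  rw [← Subgroup.map_top_of_surjective _ toExpWr_surjective, ← h, MonoidHom.map_closure,
    wreathGens, Set.image_union, Set.image_image, ← Set.range_comp]
  rfl

variable [Finite α] [Finite β] [Nontrivial β] [IsPretransitive A α] [IsPretransitive B β]
  {C : Type*} [Group C] [Group.IsPerfect C] {v : ι → α} {u u' : α} {p : ι → β → α} {c : ι → C}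

theorem eq_top_of_wreathGens_expWr_subset {H : Subgroup (PermWreath C (expWr A B) (β → α))}
    (hH : wreathGens ((fun t => toExpWr A B (inr t)) '' T)
      (fun i => toExpWr A B (labelled (q i) (z i) (b i))) p c ⊆ H)
    (hgen : Subgroup.closure (wreathGens T q z b) = ⊤) (hT : Subgroup.normalClosure T = ⊤)
    (hz : ∀ i, ∃ s, s ∉ orbit (Subgroup.zpowers (q i)) (z i)) (hv : ∀ i, b i • v i ≠ v i)
    (hu : ¬stabilizer A u ≤ stabilizer A u') (hp : ∀ i, IsMarked (q i) (z i) (v i) u u' (p i))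
    (hc : Subgroup.closure (Set.range c) = ⊤) : H = ⊤ := by
  have hgen' := closure_image_toExpWr_eq_top hgen
  have hright : H.map rightHom = ⊤ := map_rightHom_eq_top hgen' hH
  have hflat := flat_of_wreathGens_subset hgen' hH
  have hfull (x : β → α) : valuesTrivialOn (base H) ∅ x = ⊤ :=
    (hflat (Function.const β u) x).valuesTrivialOn_empty <|
      valuesTrivialOn_base_const_eq_top hT
        (fun t ht => inr_mem_of_wreathGens_subset hH (Set.mem_image_of_mem _ ht)) hright u
        (loopLabel_surjective hflat hc hH _)
  have hc' : Subgroup.normalClosure (Set.range c) = ⊤ :=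
    top_le_iff.1 (hc.ge.trans Subgroup.closure_le_normalClosure)
  exact eq_top_of_base_eq_top
    (eq_top_of_valuesTrivialOn_eq_top hfull fun x y hxy =>
      valuesTrivialOn_singleton_eq_top_of_ne hright hfull
        (fun x y s h => valuesTrivialOn_singleton_eq_top_of_separableAt hH hc' hright (hfull x) hz
          hv hu hp h) hxy.symm)
    hright

theorem HasLabelledGenerators.expWr (h : HasLabelledGenerators β T b)
    (hT : Subgroup.normalClosure T = ⊤) (hb : ∀ i, b i ≠ 1)
    (hu : ¬stabilizer A u ≤ stabilizer A u') (hc : Subgroup.closure (Set.range c) = ⊤) :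
    HasLabelledGenerators (β → α) ((fun t => toExpWr A B (inr t)) '' T) c := by
  classical
  obtain ⟨q, z, hz, hgen⟩ := h
  have : Nontrivial α := ⟨u, u', by rintro rfl; exact hu le_rfl⟩
  have hmoves (i : ι) : ∃ v : α, b i • v ≠ v := by
    by_contra! h
    exact hb i (FaithfulSMul.eq_of_smul_eq_smul fun v => by rw [h, one_smul])
  choose v hv using hmoves
  choose p hp using fun i => exists_isMarked (q i) (z i) (v i) u u'
  refine ⟨fun i => toExpWr A B (labelled (q i) (z i) (b i)), p, fun i => ?_,
    eq_top_of_wreathGens_expWr_subset Subgroup.subset_closure hgen hT hz hv hu hp hc⟩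
  obtain ⟨s, hs⟩ := hz i
  obtain ⟨e, he⟩ := exists_ne (p i s)
  exact ⟨Function.update (p i) s e, (hp i).notMem_orbit_of_separableAt hu hs
    ⟨by rw [Function.update_self]; exact he.symm,
      Or.inl fun j hj => Function.update_of_ne hj _ _⟩⟩

end Step

theorem normalClosure_toExpWr_inr_image_eq_top {α β : Type} {A : Subgroup (Perm α)}
    {B : Subgroup (Perm β)} [Finite β] [Nontrivial β] [IsPretransitive B β] [Group.IsPerfect A]
    {T : Set B} (hT : Subgroup.normalClosure T = ⊤) :
    Subgroup.normalClosure ((fun t => toExpWr A B (inr t)) '' T) = ⊤ := by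
  rw [← Subgroup.map_top_of_surjective _ toExpWr_surjective, ← normalClosure_inr_image_eq_top hT,
    Subgroup.map_normalClosure _ _ toExpWr_surjective, Set.image_image]

section Iteration

variable {S : ℕ → PermGroup} {k n : ℕ}

theorem finite_iterExpP (hfin : ∀ i < n, Finite (S i).carrier) (hk : k < n) :
    Finite (iterExpP S k).carrier := by
  induction k with
  | zero => exact hfin 0 hk
  | succ k ih =>
    have := ih (Nat.lt_of_succ_lt hk)
    have := hfin (k + 1) hk
    exact Pi.finite

theorem nontrivial_iterExpP (hnon : ∀ i < n, Nontrivial (S i).carrier) (hk : k < n) :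
    Nontrivial (iterExpP S k).carrier := by
  induction k with
  | zero => exact hnon 0 hk
  | succ k ih =>
    have := ih (Nat.lt_of_succ_lt hk)
    have := hnon (k + 1) hk
    exact Function.nontrivial

theorem isPretransitive_iterExpP (htrans : ∀ i < n, IsPretransitive (S i).grp (S i).carrier)
    (hk : k < n) : IsPretransitive (iterExpP S k).grp (iterExpP S k).carrier := by
  cases k with
  | zero => exact htrans 0 hk
  | succ k =>
    have := htrans (k + 1) hk
    exact inferInstanceAs (IsPretransitive (expWr (S (k + 1)).grp (iterExpP S k).grp)
      ((iterExpP S k).carrier → (S (k + 1)).carrier))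

/-- `botMap` as a homomorphism into the iterated exponentiation. -/
def botHom (S : ℕ → PermGroup) : (k : ℕ) → (S 0).grp →* (iterExpP S k).grp
  | 0 => MonoidHom.id _
  | k + 1 => (toExpWr (S (k + 1)).grp (iterExpP S k).grp).comp (inr.comp (botHom S k))

theorem coe_botHom (k : ℕ) (σ : (S 0).grp) : (botHom S k σ : Perm (iterExpP S k).carrier) =
    botMap S k σ := by
  induction k with
  | zero => rfl
  | succ k ih => exact congrArg (prodPerm fun _ => 1) ih

theorem botHom_zero_image (T : Set (S 0).grp) : botHom S 0 '' T = T :=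
  Set.image_id T

theorem botHom_succ_image (k : ℕ) (T : Set (S 0).grp) : botHom S (k + 1) '' T =
    (fun t => toExpWr (S (k + 1)).grp (iterExpP S k).grp (inr t)) '' (botHom S k '' T) :=
  (Set.image_image (fun t => toExpWr (S (k + 1)).grp (iterExpP S k).grp (inr t)) _ T).symm

variable {T : Set (S 0).grp}

theorem normalClosure_botHom_image_eq_top (hT : Subgroup.closure T = ⊤)
    (hfin : ∀ i < n, Finite (S i).carrier) (hnon : ∀ i < n, Nontrivial (S i).carrier)
    (htrans : ∀ i < n, IsPretransitive (S i).grp (S i).carrier)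
    (hperf : ∀ i < n, Group.IsPerfect (S (i + 1)).grp) (hk : k ≤ n) :
    Subgroup.normalClosure (botHom S k '' T) = ⊤ := by
  induction k with
  | zero =>
    rw [botHom_zero_image]
    exact top_le_iff.1 (hT.ge.trans Subgroup.closure_le_normalClosure)
  | succ k ih =>
    have := finite_iterExpP hfin hk
    have := nontrivial_iterExpP hnon hk
    have := isPretransitive_iterExpP htrans hk
    have := hperf k hk
    rw [botHom_succ_image]
    exact normalClosure_toExpWr_inr_image_eq_top (ih (Nat.le_of_succ_le hk))

theorem hasLabelledGenerators_iterExpP {ι : Type*} {c : ∀ i, ι → (S (i + 1)).grp}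
    (hT : Subgroup.closure T = ⊤)
    (hfin : ∀ i < n, Finite (S i).carrier) (hnon : ∀ i < n, Nontrivial (S i).carrier)
    (htrans : ∀ i < n, IsPretransitive (S i).grp (S i).carrier)
    (hperf : ∀ i < n, Group.IsPerfect (S (i + 1)).grp)
    (hstab : ∀ i, i + 1 < n → ∃ u u' : (S (i + 1)).carrier,
      ¬stabilizer (S (i + 1)).grp u ≤ stabilizer (S (i + 1)).grp u')
    (hc : ∀ i < n, Subgroup.closure (Set.range (c i)) = ⊤)
    (hc_ne : ∀ i, i + 1 < n → ∀ j, c i j ≠ 1) (hk : k < n) :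
    HasLabelledGenerators (iterExpP S k).carrier (botHom S k '' T) (c k) := by
  induction k with
  | zero =>
    have := finite_iterExpP hfin hk
    have := nontrivial_iterExpP hnon hk
    have := isPretransitive_iterExpP htrans hk
    rw [botHom_zero_image]
    exact hasLabelledGenerators_of_closure_eq_top hT (hc 0 hk)
  | succ k ih =>
    have hk' := Nat.lt_of_succ_lt hk
    have := finite_iterExpP hfin hk'
    have := nontrivial_iterExpP hnon hk'
    have := isPretransitive_iterExpP htrans hk'
    have := hfin (k + 1) hk
    have := htrans (k + 1) hk
    have := hperf (k + 1) hk
    obtain ⟨u, u', hu⟩ := hstab k hk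
    rw [botHom_succ_image]
    exact (ih hk').expWr (normalClosure_botHom_image_eq_top hT hfin hnon htrans hperf hk'.le)
      (hc_ne k hk) hu (hc (k + 1) hk)

end Iteration

section GeneratingFamilies

variable {G : Type*} [Group G]

theorem exists_card_eq_minGens [Group.FG G] :
    ∃ T : Finset G, T.card = minGens G ∧ Subgroup.closure (T : Set G) = ⊤ :=
  Nat.sInf_mem (Group.fg_iff'.1 ‹_›)

theorem exists_generating_family {d : ℕ} {T : Finset G} (hcard : T.card ≤ d)
    (hT : Subgroup.closure (T : Set G) = ⊤) :
    ∃ a : Fin d → G, Subgroup.closure (Set.range a) = ⊤ ∧ (Nontrivial G → ∀ i, a i ≠ 1) := by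
  classical
  cases subsingleton_or_nontrivial G with
  | inl _ => exact ⟨1, Subsingleton.elim _ _, fun h => absurd h (not_nontrivial G)⟩
  | inr _ =>
    have hT' : Subgroup.closure ((T.erase 1 : Finset G) : Set G) = ⊤ := by
      rw [Finset.coe_erase, Subgroup.closure_sdiff_one, hT]
    have hne : (T.erase 1).Nonempty := by
      rw [Finset.nonempty_iff_ne_empty]
      intro h
      rw [h, Finset.coe_empty, Subgroup.closure_empty] at hT'
      exact bot_ne_top hT'
    have : Nonempty (T.erase 1) := hne.to_subtype
    obtain ⟨e⟩ : Nonempty (T.erase 1 ↪ Fin d) := Function.Embedding.nonempty_of_card_le <| by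
      simpa only [Fintype.card_coe, Fintype.card_fin] using T.card_erase_le.trans hcard
    refine ⟨fun i => (Function.invFun e i : T.erase 1), ?_, fun _ i =>
      Finset.ne_of_mem_erase (Function.invFun e i).2⟩
    rw [← hT', ← Function.comp_def, (Function.invFun_surjective e.injective).range_comp,
      Subtype.range_coe_subtype]
    rfl

end GeneratingFamilies

theorem isPretransitive_of_forall_exists {α : Type*} {A : Subgroup (Perm α)}
    (h : ∀ x y, ∃ σ ∈ A, σ x = y) : IsPretransitive A α where
  exists_smul_eq x y := by
    obtain ⟨σ, hσ, hxy⟩ := h x y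
    exact ⟨⟨σ, hσ⟩, hxy⟩

theorem stabilizer_ne_of_setOf_ne {α : Type*} {A : Subgroup (Perm α)} {x y : α}
    (h : {σ | σ ∈ A ∧ σ x = x} ≠ {σ | σ ∈ A ∧ σ y = y}) : stabilizer A x ≠ stabilizer A y := by
  contrapose! h
  ext σ
  exact and_congr_right fun hσ => SetLike.ext_iff.1 h ⟨σ, hσ⟩

section Generation

variable {S : ℕ → PermGroup} {n : ℕ}

theorem exists_closure_botHom_image_union_range_eq_top {d : ℕ} [Nontrivial (S 0).carrier]
    (hfin : ∀ k < n, Finite (S k).carrier)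
    (htrans : ∀ k < n, IsPretransitive (S k).grp (S k).carrier)
    (hperf : ∀ k < n, Group.IsPerfect (S (k + 1)).grp)
    (hgen : ∀ k < n, ∃ T : Finset (S (k + 1)).grp, T.card ≤ d ∧
      Subgroup.closure (T : Set (S (k + 1)).grp) = ⊤)
    (hstab : ∀ k, k + 1 < n → ∃ i j : (S (k + 1)).carrier,
      stabilizer (S (k + 1)).grp i ≠ stabilizer (S (k + 1)).grp j)
    {T : Set (S 0).grp} (hT : Subgroup.closure T = ⊤) :
    ∃ g : Fin d → (iterExpP S n).grp, Subgroup.closure (botHom S n '' T ∪ Set.range g) = ⊤ := by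
  have hstab' (k : ℕ) (hk : k + 1 < n) : ∃ i j : (S (k + 1)).carrier,
      ¬stabilizer (S (k + 1)).grp i ≤ stabilizer (S (k + 1)).grp j := by
    obtain ⟨i, j, hij⟩ := hstab k hk
    by_contra! h
    exact hij (le_antisymm (h i j) (h j i))
  have hnon (k : ℕ) (hk : k < n) : Nontrivial (S k).carrier := by
    cases k with
    | zero => assumption
    | succ k =>
      obtain ⟨i, j, hij⟩ := hstab k hk
      exact ⟨i, j, fun h => hij (h ▸ rfl)⟩
  have hnon_grp (k : ℕ) (hk : k + 1 < n) : Nontrivial (S (k + 1)).grp := by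
    obtain ⟨i, j, hij⟩ := hstab k hk
    by_contra h
    rw [not_nontrivial_iff_subsingleton] at h
    exact hij (Subsingleton.elim _ _)
  choose! c hc hc_ne using fun k hk =>
    (hgen k hk).elim fun _ h => exists_generating_family h.1 h.2
  cases n with
  | zero => exact ⟨1, top_le_iff.1 (hT.ge.trans (Subgroup.closure_mono
      (by rw [botHom_zero_image]; exact Set.subset_union_left)))⟩
  | succ n =>
    obtain ⟨q, x, -, h⟩ := hasLabelledGenerators_iterExpP hT hfin hnon htrans hperf hstab' hc
      (fun i hi => hc_ne i (Nat.lt_of_succ_lt hi) (hnon_grp i hi)) n.lt_succ_self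
    rw [botHom_succ_image]
    exact ⟨_, closure_image_toExpWr_eq_top h⟩

theorem iter_dgen_general (d n : ℕ) (S : ℕ → PermGroup) [Nontrivial (S 0).carrier]
    [Group.FG (S 0).grp] (hfin : ∀ k < n, Finite (S k).carrier)
    (htrans : ∀ k < n, IsPretransitive (S k).grp (S k).carrier)
    (hperf : ∀ k < n, Group.IsPerfect (S (k + 1)).grp)
    (hgen : ∀ k < n, ∃ T : Finset (S (k + 1)).grp, T.card ≤ d ∧
      Subgroup.closure (T : Set (S (k + 1)).grp) = ⊤)
    (hstab : ∀ k, k + 1 < n → ∃ i j : (S (k + 1)).carrier,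
      stabilizer (S (k + 1)).grp i ≠ stabilizer (S (k + 1)).grp j) :
    (∃ T : Finset (iterExpP S n).grp, T.card ≤ d + minGens (S 0).grp ∧
      Subgroup.closure (T : Set (iterExpP S n).grp) = ⊤) ∧
    ∀ T : Set (S 0).grp, Subgroup.closure T = ⊤ →
      ∃ g : Fin d → Perm (iterExpP S n).carrier, (∀ i, g i ∈ (iterExpP S n).grp) ∧
        Subgroup.closure ((fun σ : (S 0).grp => botMap S n σ) '' T ∪ Set.range g) =
          (iterExpP S n).grp := by
  classical
  refine ⟨?_, fun T hT => ?_⟩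
  · obtain ⟨T, hcard, hT⟩ := exists_card_eq_minGens (G := (S 0).grp)
    obtain ⟨g, hg⟩ :=
      exists_closure_botHom_image_union_range_eq_top hfin htrans hperf hgen hstab hT
    refine ⟨T.image (botHom S n) ∪ Finset.univ.image g, ?_, by simpa using hg⟩
    have hcard_g : (Finset.univ.image g).card ≤ d := by
      simpa using Finset.card_image_le (s := Finset.univ) (f := g)
    calc (T.image (botHom S n) ∪ Finset.univ.image g).card
        ≤ (T.image (botHom S n)).card + (Finset.univ.image g).card := Finset.card_union_le _ _
      _ ≤ minGens (S 0).grp + d := add_le_add (Finset.card_image_le.trans hcard.le) hcard_g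
      _ = d + minGens (S 0).grp := add_comm _ _
  · obtain ⟨g, hg⟩ :=
      exists_closure_botHom_image_union_range_eq_top hfin htrans hperf hgen hstab hT
    refine ⟨fun i => g i, fun i => (g i).2, ?_⟩
    have hmap := congrArg (Subgroup.map (iterExpP S n).grp.subtype) hg
    rw [MonoidHom.map_closure, Set.image_union, Set.image_image, ← Set.range_comp,
      ← MonoidHom.range_eq_map, Subgroup.range_subtype] at hmap
    simpa only [Subgroup.coe_subtype, coe_botHom, Function.comp_def] using hmap

end Generation

/-- **Lemma (d + d(S₁) generators for the finite iterated exponentiation).** -/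
theorem iter_dgen (d n : ℕ) (hd : 0 < d) (m : ℕ → ℕ)
    (S : ∀ k, Subgroup (Perm (Fin (m k))))
    (htrans : ∀ k, k ≤ n → ∀ x y : Fin (m k), ∃ σ ∈ S k, σ x = y)
    (hperf : ∀ k, k ≤ n → commutator (S k) = ⊤)
    (hgen : ∀ k, k ≤ n → ∃ T : Finset (S k), T.card ≤ d ∧
      Subgroup.closure (T : Set (S k)) = ⊤)
    (hstab : ∀ k, k ≤ n → ∃ i j : Fin (m k),
      {σ : Perm (Fin (m k)) | σ ∈ S k ∧ σ i = i} ≠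
        {σ : Perm (Fin (m k)) | σ ∈ S k ∧ σ j = j}) :
    (∃ T : Finset ((iterExpP (fun k => ⟨Fin (m k), S k⟩) n).grp),
      T.card ≤ d + minGens (S 0) ∧
      Subgroup.closure (T : Set ((iterExpP (fun k => ⟨Fin (m k), S k⟩) n).grp)) = ⊤) ∧
    ∀ T : Finset (S 0), Subgroup.closure (T : Set (S 0)) = ⊤ →
      ∃ g : Fin d → Perm ((iterExpP (fun k => ⟨Fin (m k), S k⟩) n).carrier),
        (∀ i, g i ∈ (iterExpP (fun k => ⟨Fin (m k), S k⟩) n).grp) ∧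
        Subgroup.closure
          ((fun σ : (S 0) => botMap (fun k => ⟨Fin (m k), S k⟩) n (σ : Perm (Fin (m 0)))) '' T
            ∪ Set.range g) = (iterExpP (fun k => ⟨Fin (m k), S k⟩) n).grp := by
  obtain ⟨i, j, hij⟩ := hstab 0 n.zero_le
  have : Nontrivial (Fin (m 0)) := ⟨i, j, fun h => hij (h ▸ rfl)⟩
  have : Group.FG (S 0) := Group.fg_of_finite
  refine (iter_dgen_general d n (fun k => ⟨Fin (m k), S k⟩) (fun _ _ => Finite.of_fintype _)
    (fun k hk => isPretransitive_of_forall_exists (htrans k hk.le)) (fun k hk => ⟨hperf _ hk⟩)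
    (fun k hk => hgen _ hk) fun k hk => ?_).imp_right fun h T hT => h T hT
  obtain ⟨i, j, hij⟩ := hstab (k + 1) hk.le
  exact ⟨i, j, stabilizer_ne_of_setOf_ne hij⟩
end
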